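/- Let θ be a proper convex piecewise linear function on ℝ^m, let Φ : ℝ^n × ℝ^d → ℝ^m be C²-smooth around (x̄,w̄) with z̄ := Φ(x̄,w̄) ∈ dom θ, set ψ(x,w) := θ(Φ(x,w)), and assume the second-order qualification condition S(z̄) ∩ ker ∇_xΦ(x̄,w̄)* = {0}. Let q̄ ∈ ∂_xψ(x̄,w̄) and let v̄ be the unique element of M(x̄,w̄,q̄) := {v ∈ ∂θ(z̄) : ∇_xΦ(x̄,w̄)*v = q̄}. Then for every u ∈ ℝ^n the following exact second-order chain rule holds: (D*∂_xψ)(x̄,w̄,q̄)(u) = { (∇²_{xx}⟨v̄,Φ⟩(x̄,w̄)u + ∇_xΦ(x̄,w̄)*y, ∇²_{xw}⟨v̄,Φ⟩(x̄,w̄)u + ∇_wΦ(x̄,w̄)*y) : y ∈ ∂²θ(z̄,v̄)(∇_xΦ(x̄,w̄)u) }, where ⟨v̄,Φ⟩(x,w) := ⟨v̄, Φ(x,w)⟩. -/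

import Mathlib

noncomputable section
open Set Filter Topology Metric
open scoped RealInnerProductSpace Pointwise NNReal Classical

/-- `Euc m` is the Euclidean space `ℝ^m`. -/
abbrev Euc (m : ℕ) := EuclideanSpace ℝ (Fin m)

variable {F G : Type*} [NormedAddCommGroup F] [InnerProductSpace ℝ F]
  [NormedAddCommGroup G] [InnerProductSpace ℝ G]

/-- The (convex) subdifferential of an extended-real-valued function:
`∂θ(z) = {v : θ(z') ≥ θ(z) + ⟨v, z' - z⟩ for all z'}`. -/
def subdiff (θ : F → EReal) (z : F) : Set F :=
  {v | ∀ z', θ z + ((⟪v, z' - z⟫ : ℝ) : EReal) ≤ θ z'}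

/-- The Fréchet (regular) normal cone to `Ω` at `x`:
vectors `v` with `limsup_{y → x, y ∈ Ω} ⟨v, y - x⟩ / ‖y - x‖ ≤ 0`. -/
def frechetNormal (Ω : Set F) (x : F) : Set F :=
  {v | Filter.limsup (fun y => ⟪v, y - x⟫ / ‖y - x‖) (𝓝[Ω] x) ≤ 0}

/-- The limiting (Mordukhovich) normal cone to `Ω` at `x`. -/
def limitingNormal (Ω : Set F) (x : F) : Set F :=
  {v | ∃ xs vs : ℕ → F, (∀ k, xs k ∈ Ω) ∧ Filter.Tendsto xs Filter.atTop (𝓝 x) ∧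
    Filter.Tendsto vs Filter.atTop (𝓝 v) ∧ ∀ k, vs k ∈ frechetNormal Ω (xs k)}

/-- Pairing into the `ℓ²`-product of two inner product spaces. -/
def pl2 (x : F) (y : G) : WithLp 2 (F × G) := (WithLp.equiv 2 (F × G)).symm (x, y)

/-- The second-order subdifferential (generalized Hessian)
`∂²θ(z,v)(u) = {w : (w,-u) ∈ N((z,v); gph ∂θ)}`. -/
def sosd (θ : F → EReal) (z v : F) (u : F) : Set F :=
  {w | pl2 w (-u) ∈ limitingNormal
    {q : WithLp 2 (F × F) | ((WithLp.equiv 2 (F × F)) q).2 ∈ subdiff θ ((WithLp.equiv 2 (F × F)) q).1}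
    (pl2 z v)}

/-- The polyhedral domain `{z : ⟨d i, z⟩ ≤ β i for all i}` of a CPWL function. -/
def cpwlDom {m p : ℕ} (d : Fin p → Euc m) (β : Fin p → ℝ) : Set (Euc m) :=
  {z | ∀ i, ⟪d i, z⟫ ≤ β i}

/-- The CPWL function determined by the data `(a, α, d, β)`:
`θ(z) = max_i (⟨a i, z⟩ - α i)` on its polyhedral domain and `+∞` outside. -/
def cpwlFun {m l p : ℕ} (a : Fin l → Euc m) (α : Fin l → ℝ) (d : Fin p → Euc m)
    (β : Fin p → ℝ) : Euc m → EReal :=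
  fun z => if z ∈ cpwlDom d β then (((⨆ i, (⟪a i, z⟫ - α i)) : ℝ) : EReal) else ⊤

/-- Active indices of the max expression at `z`. -/
def Kact {m l p : ℕ} (a : Fin l → Euc m) (α : Fin l → ℝ) (d : Fin p → Euc m) (β : Fin p → ℝ)
    (z : Euc m) : Set (Fin l) :=
  {i | cpwlFun a α d β z = ((⟪a i, z⟫ - α i : ℝ) : EReal)}

/-- Active indices of the domain inequalities at `z`. -/
def Iact {m p : ℕ} (d : Fin p → Euc m) (β : Fin p → ℝ) (z : Euc m) : Set (Fin p) :=
  {i | ⟪d i, z⟫ = β i}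

/-- Convex conic hull: all finite nonnegative combinations of elements of `s`. -/
def coneHull (s : Set F) : Set F :=
  {x | ∃ (n : ℕ) (c : Fin n → ℝ) (y : Fin n → F), (∀ i, 0 ≤ c i) ∧ (∀ i, y i ∈ s) ∧
    x = ∑ i, c i • y i}

/-- `Spar θ z` is the linear subspace parallel to the affine hull of `∂θ(z)`. -/
def Spar (θ : F → EReal) (z : F) : Submodule ℝ F := (affineSpan ℝ (subdiff θ z)).direction

/-- A convex polyhedron: a finite intersection of closed halfspaces. -/
def IsPolyhedron {V : Type*} [AddCommGroup V] [Module ℝ V] (C : Set V) : Prop :=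
  ∃ (N : ℕ) (f : Fin N → V →ₗ[ℝ] ℝ) (b : Fin N → ℝ), C = {x | ∀ i, f i x ≤ b i}

/-- A proper convex piecewise linear function with values in `ℝ ∪ {+∞}`:
its epigraph is a convex polyhedron, it never takes the value `-∞`, and it is
not identically `+∞`. -/
def IsCPWL {V : Type*} [AddCommGroup V] [Module ℝ V] (f : V → EReal) : Prop :=
  IsPolyhedron {xt : V × ℝ | f xt.1 ≤ (xt.2 : EReal)} ∧ (∀ x, f x ≠ ⊥) ∧ (∃ x, f x ≠ ⊤)

/-- Local argmin set `M_γ(w,v)` of `x ↦ φ(x,w) - ⟨v,x⟩` over the ball `‖x - xb‖ ≤ γ`,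
with the convention that minimizers at which the objective is `+∞` are discarded. -/
def argminLoc {n d : ℕ} (φ : Euc n → Euc d → EReal) (xb : Euc n) (γ : ℝ) (w : Euc d)
    (v : Euc n) : Set (Euc n) :=
  {x | ‖x - xb‖ ≤ γ ∧ φ x w ≠ ⊤ ∧
    ∀ y, ‖y - xb‖ ≤ γ → φ x w - ((⟪v, x⟫ : ℝ) : EReal) ≤ φ y w - ((⟪v, y⟫ : ℝ) : EReal)}

/-- Local optimal value `m_γ(w,v)` of `x ↦ φ(x,w) - ⟨v,x⟩` over the ball `‖x - xb‖ ≤ γ`. -/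
def infLoc {n d : ℕ} (φ : Euc n → Euc d → EReal) (xb : Euc n) (γ : ℝ) (w : Euc d)
    (v : Euc n) : EReal :=
  ⨅ x ∈ {x : Euc n | ‖x - xb‖ ≤ γ}, (φ x w - ((⟪v, x⟫ : ℝ) : EReal))

/-- `xb` is a fully stable locally optimal solution of
`minimize φ(x,wb) - ⟨vb,x⟩` : for some `γ > 0` and neighborhoods `W × V` of `(wb,vb)`,
the local argmin map is single-valued and Lipschitz with value `xb` at `(wb,vb)`, and the
local optimal value function is finite and Lipschitz. -/
def FullyStableSol {n d : ℕ} (φ : Euc n → Euc d → EReal) (xb : Euc n) (wb : Euc d)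
    (vb : Euc n) : Prop :=
  ∃ γ > (0 : ℝ), ∃ W ∈ 𝓝 wb, ∃ V ∈ 𝓝 vb,
    (∃ σ : Euc d × Euc n → Euc n,
      (∃ K : ℝ≥0, LipschitzOnWith K σ (W ×ˢ V)) ∧
      (∀ w ∈ W, ∀ v ∈ V, argminLoc φ xb γ w v = {σ (w, v)}) ∧ σ (wb, vb) = xb) ∧
    (∃ μ : Euc d × Euc n → ℝ,
      (∃ K : ℝ≥0, LipschitzOnWith K μ (W ×ˢ V)) ∧
      ∀ w ∈ W, ∀ v ∈ V, infLoc φ xb γ w v = ((μ (w, v) : ℝ) : EReal))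

/-- The partial limiting subdifferential `∂ₓψ(x,w)` defined through the limiting normal
cone to the epigraph of `ψ(·,w)`. -/
def partialSubdiffX {n d : ℕ} (ψ : Euc n → Euc d → EReal) (x : Euc n) (w : Euc d) :
    Set (Euc n) :=
  {v | ∃ r : ℝ, ψ x w = (r : EReal) ∧
    pl2 v (-1 : ℝ) ∈ limitingNormal
      {q : WithLp 2 (Euc n × ℝ) |
        ψ ((WithLp.equiv 2 (Euc n × ℝ)) q).1 w ≤ ((((WithLp.equiv 2 (Euc n × ℝ)) q).2 : ℝ) : EReal)}
      (pl2 x r)}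

/-- The coderivative `D*∂ₓψ(xb,wb,qb)(u)` of the partial subdifferential mapping,
via the limiting normal cone to its graph in `ℝ^n × ℝ^d × ℝ^n`. -/
def coderivPartialSubdiffX {n d : ℕ} (ψ : Euc n → Euc d → EReal) (xb : Euc n) (wb : Euc d)
    (qb : Euc n) (u : Euc n) : Set (Euc n × Euc d) :=
  {P | pl2 (pl2 P.1 P.2) (-u) ∈ limitingNormal
    {t : WithLp 2 (WithLp 2 (Euc n × Euc d) × Euc n) |
      ((WithLp.equiv 2 (WithLp 2 (Euc n × Euc d) × Euc n)) t).2 ∈ partialSubdiffX ψ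
        ((WithLp.equiv 2 (Euc n × Euc d)) (((WithLp.equiv 2 (WithLp 2 (Euc n × Euc d) × Euc n)) t).1)).1
        ((WithLp.equiv 2 (Euc n × Euc d)) (((WithLp.equiv 2 (WithLp 2 (Euc n × Euc d) × Euc n)) t).1)).2}
    (pl2 (pl2 xb wb) qb)}

/-- Partial Hessian in `x` : the derivative in `x` of the partial gradient in `x`. -/
def hessXX {n d : ℕ} (g : Euc n → Euc d → ℝ) (xb : Euc n) (wb : Euc d) : Euc n →L[ℝ] Euc n :=
  fderiv ℝ (fun x => gradient (fun x' => g x' wb) x) xb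

/-- Mixed partial Hessian: derivative in `w` of the partial gradient in `x`. -/
def hessWX {n d : ℕ} (g : Euc n → Euc d → ℝ) (xb : Euc n) (wb : Euc d) : Euc d →L[ℝ] Euc n :=
  fderiv ℝ (fun w => gradient (fun x' => g x' w) xb) wb

/-! ### Normals as functionals -/

/-- Fréchet normal functionals. -/
def FN {E : Type*} [NormedAddCommGroup E] [NormedSpace ℝ E] (Ω : Set E) (x : E)
    (f : E →L[ℝ] ℝ) : Prop :=
  ∀ ε > (0 : ℝ), ∀ᶠ y in 𝓝 x, y ∈ Ω → f (y - x) ≤ ε * ‖y - x‖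

/-- Limiting normal functionals. -/
def LN {E : Type*} [NormedAddCommGroup E] [NormedSpace ℝ E] (Ω : Set E) (x : E) :
    Set (E →L[ℝ] ℝ) :=
  {f | ∃ (xs : ℕ → E) (fs : ℕ → E →L[ℝ] ℝ), (∀ k, xs k ∈ Ω) ∧ Tendsto xs atTop (𝓝 x) ∧
    Tendsto fs atTop (𝓝 f) ∧ ∀ k, FN Ω (xs k) (fs k)}

theorem frechetNormal_iff {E : Type*} [NormedAddCommGroup E] [InnerProductSpace ℝ E]
    {Ω : Set E} {x : E} (hx : x ∈ Ω) (v : E) :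
    v ∈ frechetNormal Ω x ↔ FN Ω x (innerSL ℝ v) := by
  have hne : (𝓝[Ω] x).NeBot := mem_closure_iff_nhdsWithin_neBot.1 (subset_closure hx)
  have hub : ∀ y, ⟪v, y - x⟫ / ‖y - x‖ ≤ ‖v‖ := by
    intro y
    apply div_le_of_le_mul₀ (norm_nonneg _) (norm_nonneg _) (real_inner_le_norm _ _)
  have hlb : ∀ y, -‖v‖ ≤ ⟪v, y - x⟫ / ‖y - x‖ := by
    intro y
    have h := div_le_of_le_mul₀ (norm_nonneg (y - x)) (norm_nonneg (-v))
      (real_inner_le_norm (-v) (y - x))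
    rw [inner_neg_left, norm_neg, neg_div] at h
    linarith
  have hbd : IsBoundedUnder (· ≤ ·) (𝓝[Ω] x) (fun y => ⟪v, y - x⟫ / ‖y - x‖) :=
    isBoundedUnder_of ⟨_, hub⟩
  have hcb : IsCoboundedUnder (· ≤ ·) (𝓝[Ω] x) (fun y => ⟪v, y - x⟫ / ‖y - x‖) :=
    (isBoundedUnder_of ⟨_, hlb⟩ : IsBoundedUnder (· ≥ ·) _ _).isCoboundedUnder_le
  constructor
  · intro h ε hε
    have h1 : Filter.limsup (fun y => ⟪v, y - x⟫ / ‖y - x‖) (𝓝[Ω] x) < ε := lt_of_le_of_lt h hε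
    have h2 := eventually_lt_of_limsup_lt h1 hbd
    rw [eventually_nhdsWithin_iff] at h2
    filter_upwards [h2] with y hy hyΩ
    rcases eq_or_ne y x with rfl | hne
    · simp
    · have hp : 0 < ‖y - x‖ := norm_pos_iff.2 (sub_ne_zero.2 hne)
      exact ((div_lt_iff₀ hp).1 (hy hyΩ)).le
  · intro h
    show Filter.limsup (fun y => ⟪v, y - x⟫ / ‖y - x‖) (𝓝[Ω] x) ≤ 0
    apply le_of_forall_pos_le_add
    intro ε hε
    rw [zero_add]
    apply limsup_le_of_le hcb
    rw [eventually_nhdsWithin_iff]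
    filter_upwards [h ε hε] with y hy hyΩ
    exact div_le_of_le_mul₀ (norm_nonneg _) hε.le (hy hyΩ)

theorem limitingNormal_iff {E : Type*} [NormedAddCommGroup E] [InnerProductSpace ℝ E]
    [CompleteSpace E] {Ω : Set E} {x : E} (v : E) :
    v ∈ limitingNormal Ω x ↔ innerSL ℝ v ∈ LN Ω x := by
  constructor
  · rintro ⟨xs, vs, h1, h2, h3, h4⟩
    exact ⟨xs, fun k => innerSL ℝ (vs k), h1, h2,
      ((innerSL ℝ (E := E)).continuous.tendsto v).comp h3,
      fun k => (frechetNormal_iff (h1 k) _).1 (h4 k)⟩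
  · rintro ⟨xs, fs, h1, h2, h3, h4⟩
    refine ⟨xs, fun k => (InnerProductSpace.toDual ℝ E).symm (fs k), h1, h2, ?_, fun k => ?_⟩
    · have := ((InnerProductSpace.toDual ℝ E).symm.continuous.tendsto _).comp h3
      have e : (InnerProductSpace.toDual ℝ E).symm (innerSL ℝ v) = v := by
        rw [LinearIsometryEquiv.symm_apply_eq]; rfl
      rw [e] at this
      exact this
    · rw [frechetNormal_iff (h1 k)]
      convert h4 k
      ext y
      simp

theorem FN_pull {E H : Type*} [NormedAddCommGroup E] [NormedSpace ℝ E]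
    [NormedAddCommGroup H] [NormedSpace ℝ H] {ρ : H → E} {ρ' : H →L[ℝ] E} {z : H}
    {Ω : Set H} {Γ : Set E} {f : E →L[ℝ] ℝ} (hρ : HasFDerivAt ρ ρ' z)
    (hmap : ∀ᶠ y in 𝓝 z, y ∈ Ω → ρ y ∈ Γ) (h : FN Γ (ρ z) f) : FN Ω z (f.comp ρ') := by
  intro ε hε
  obtain ⟨C, hCpos, hC⟩ := hρ.isBigO_sub.exists_pos
  have hC := hC.bound
  have h1 := hρ.continuousAt.eventually (h (ε / (2 * C)) (by positivity))
  have h2 := (hasFDerivAt_iff_isLittleO.1 hρ).bound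
    (show 0 < ε / (2 * (‖f‖ + 1)) by positivity)
  filter_upwards [hmap, hC, h1, h2] with y hy hCy h1y h2y hyΩ
  have a1 := h1y (hy hyΩ)
  have a2 : f (ρ' (y - z)) = f (ρ y - ρ z) - f (ρ y - ρ z - ρ' (y - z)) := by
    rw [map_sub f (ρ y - ρ z)]; ring
  have a3 : -(f (ρ y - ρ z - ρ' (y - z))) ≤ ‖f‖ * (ε / (2 * (‖f‖ + 1)) * ‖y - z‖) :=
    (neg_le_abs _).trans ((f.le_opNorm _).trans (by gcongr))
  have a4 : ε / (2 * C) * ‖ρ y - ρ z‖ ≤ ε / 2 * ‖y - z‖ := by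
    calc ε / (2 * C) * ‖ρ y - ρ z‖ ≤ ε / (2 * C) * (C * ‖y - z‖) := by gcongr
      _ = ε / 2 * ‖y - z‖ := by field_simp
  have a5 : ‖f‖ * (ε / (2 * (‖f‖ + 1)) * ‖y - z‖) ≤ ε / 2 * ‖y - z‖ := by
    rw [← mul_assoc]
    gcongr
    rw [mul_div_assoc', div_le_div_iff₀ (by positivity) (by norm_num)]
    nlinarith [norm_nonneg f]
  rw [ContinuousLinearMap.comp_apply, a2]
  linarith

theorem FN_univ {f : ℝ →L[ℝ] ℝ} (h : FN univ 0 f) : f = 0 := by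
  have key : f 1 = 0 := by
    apply le_antisymm
    · apply le_of_forall_pos_le_add
      intro ε hε
      rcases Metric.eventually_nhds_iff.1 (h ε hε) with ⟨δ, hδ, hh⟩
      have := hh (y := δ / 2) (by rw [dist_zero_right, Real.norm_eq_abs, abs_of_pos] <;> linarith)
        (mem_univ _)
      rw [sub_zero, Real.norm_eq_abs, abs_of_pos (by linarith)] at this
      have e : f (δ / 2) = δ / 2 * f 1 := by
        rw [← smul_eq_mul, ← map_smul]; simp
      rw [e] at this
      nlinarith
    · apply le_of_forall_pos_le_add
      intro ε hε
      rcases Metric.eventually_nhds_iff.1 (h ε hε) with ⟨δ, hδ, hh⟩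
      have := hh (y := -(δ / 2)) (by
        rw [dist_zero_right, Real.norm_eq_abs, abs_neg, abs_of_pos] <;> linarith) (mem_univ _)
      rw [sub_zero, Real.norm_eq_abs, abs_neg, abs_of_pos (by linarith)] at this
      have e : f (-(δ / 2)) = -(δ / 2) * f 1 := by
        rw [← smul_eq_mul, ← map_smul]; simp
      rw [e] at this
      nlinarith
  ext
  simpa using key

/-- Local linearization of a submersion. -/
theorem exists_linearization {E H : Type*} [NormedAddCommGroup E] [NormedSpace ℝ E]
    [CompleteSpace E] [NormedAddCommGroup H] [NormedSpace ℝ H] {Φ : E → H} {Φ' : E →L[ℝ] H}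
    {t : E} (hΦ : HasStrictFDerivAt Φ Φ' t) {R : H →L[ℝ] E}
    (hR : ∀ y, Φ' (R y) = y) :
    ∃ N : E → E, N t = t ∧ HasFDerivAt N (ContinuousLinearMap.id ℝ E) t ∧
      ∀ᶠ e in 𝓝 t, Φ (N e) = Φ t + Φ' (e - t) := by
  let M : E → E := fun e => e + R (Φ e - Φ t - Φ' (e - t))
  have hMt : M t = t := by simp [M]
  have hM : HasStrictFDerivAt M ((ContinuousLinearEquiv.refl ℝ E : E ≃L[ℝ] E) : E →L[ℝ] E) t := by
    have h1 : HasStrictFDerivAt (fun e => Φ e - Φ t - Φ' (e - t)) (Φ' - Φ') t := by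
      refine (hΦ.sub_const _).sub ?_
      have : HasStrictFDerivAt (fun e => Φ' e - Φ' t) Φ' t := Φ'.hasStrictFDerivAt.sub_const _
      simpa only [map_sub] using this
    have h2 := (hasStrictFDerivAt_id (𝕜 := ℝ) t).add
      ((R.hasStrictFDerivAt (x := Φ t - Φ t - Φ' (t - t))).comp t h1)
    have e2 : ContinuousLinearMap.id ℝ E + R.comp (Φ' - Φ') =
        ((ContinuousLinearEquiv.refl ℝ E : E ≃L[ℝ] E) : E →L[ℝ] E) := by
      ext; simp
    rw [e2] at h2
    exact h2
  refine ⟨hM.localInverse M _ t, ?_, ?_, ?_⟩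
  · have := hM.localInverse_apply_image
    rwa [hMt] at this
  · have := hM.to_localInverse.hasFDerivAt
    rwa [hMt] at this
  · have := hM.eventually_right_inverse
    rw [hMt] at this
    filter_upwards [this] with e he
    generalize hM.localInverse M _ t e = e' at he
    have : Φ' (M e' - t) = Φ e' - Φ t := by
      simp only [M, map_sub, map_add, hR]; abel
    rw [he] at this
    rw [this]; abel

theorem FN_preimage {E H : Type*} [NormedAddCommGroup E] [NormedSpace ℝ E]
    [CompleteSpace E] [NormedAddCommGroup H] [NormedSpace ℝ H] {Φ : E → H} {Φ' : E →L[ℝ] H}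
    {t : E} (hΦ : HasStrictFDerivAt Φ Φ' t) {R : H →L[ℝ] E}
    (hR : ∀ y, Φ' (R y) = y) {Γ : Set E} {Ω : Set H}
    (hΓ : ∀ᶠ x in 𝓝 t, (x ∈ Γ ↔ Φ x ∈ Ω)) (htΓ : t ∈ Γ) {f : E →L[ℝ] ℝ} (hf : FN Γ t f) :
    FN Ω (Φ t) (f.comp R) ∧ f = (f.comp R).comp Φ' := by
  obtain ⟨N, hNt, hN, hlin⟩ := exists_linearization hΦ hR
  have hNc : Tendsto N (𝓝 t) (𝓝 t) := by
    have := hN.continuousAt; unfold ContinuousAt at this; rwa [hNt] at this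
  constructor
  · let ρ : H → E := fun z => N (t + R (z - Φ t))
    have hin : HasFDerivAt (fun z => t + R (z - Φ t)) R (Φ t) := by
      have : HasFDerivAt (fun z => t + (R z - R (Φ t))) R (Φ t) :=
        (R.hasFDerivAt.sub_const _).const_add t
      simpa only [map_sub] using this
    have hbase : t + R (Φ t - Φ t) = t := by simp
    have hρ : HasFDerivAt ρ R (Φ t) := by
      have := (show HasFDerivAt N (ContinuousLinearMap.id ℝ E) (t + R (Φ t - Φ t)) by
        rwa [hbase]).comp (Φ t) hin
      rw [ContinuousLinearMap.id_comp] at this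
      exact this
    have hρt : ρ (Φ t) = t := by simp [ρ, hNt]
    refine FN_pull (Γ := Γ) hρ ?_ (by rwa [hρt])
    have hc : Tendsto (fun z => t + R (z - Φ t)) (𝓝 (Φ t)) (𝓝 t) := by
      have := hin.continuousAt; unfold ContinuousAt at this; beta_reduce at this; rwa [hbase] at this
    filter_upwards [hc.eventually hlin, (hNc.comp hc).eventually hΓ] with z h1 h2 hz
    apply h2.2
    simp only [Function.comp]
    rw [h1]
    simpa [hR] using hz
  · ext e
    have hker : ∀ k, Φ' k = 0 → f k = 0 := by
      intro k hk
      let c : ℝ → E := fun τ => N (t + τ • k)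
      have hin : HasFDerivAt (fun τ : ℝ => t + τ • k)
          ((ContinuousLinearMap.id ℝ ℝ).smulRight k) 0 :=
        ((hasFDerivAt_id (𝕜 := ℝ) (0 : ℝ)).smul_const k).const_add t
      have hbase : t + (0 : ℝ) • k = t := by simp
      have hc : HasFDerivAt c ((ContinuousLinearMap.id ℝ ℝ).smulRight k) 0 := by
        have := (show HasFDerivAt N (ContinuousLinearMap.id ℝ E) (t + (0 : ℝ) • k) by
          rwa [hbase]).comp (0 : ℝ) hin
        rw [ContinuousLinearMap.id_comp] at this
        exact this
      have hc0 : c 0 = t := by simp [c, hNt]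
      have hct : Tendsto (fun τ : ℝ => t + τ • k) (𝓝 0) (𝓝 t) := by
        have := hin.continuousAt; unfold ContinuousAt at this; beta_reduce at this; rwa [hbase] at this
      have hz : FN univ 0 (f.comp ((ContinuousLinearMap.id ℝ ℝ).smulRight k)) := by
        refine FN_pull (Γ := Γ) hc ?_ (by rwa [hc0])
        filter_upwards [hct.eventually hlin, (hNc.comp hct).eventually hΓ] with z h1 h2 hz
        apply h2.2
        simp only [Function.comp]
        rw [h1]
        simpa [hk] using hΓ.self_of_nhds.1 htΓ
      have := congrArg (fun g : ℝ →L[ℝ] ℝ => g 1) (FN_univ hz)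
      simpa using this
    have := hker (e - R (Φ' e)) (by simp [hR])
    rw [map_sub, sub_eq_zero] at this
    simpa using this

theorem exists_right_inv_of_near {E H : Type*} [NormedAddCommGroup E] [NormedSpace ℝ E]
    [NormedAddCommGroup H] [NormedSpace ℝ H] [CompleteSpace H] {A : E →L[ℝ] H} {R : H →L[ℝ] E}
    (hu : IsUnit (A.comp R)) : ∃ R' : H →L[ℝ] E, ∀ y, A (R' y) = y := by
  obtain ⟨u, hu⟩ := hu
  refine ⟨R.comp (u⁻¹ : (H →L[ℝ] H)ˣ).1, fun y => ?_⟩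
  have := u.mul_inv
  have := congrArg (fun g : H →L[ℝ] H => g y) this
  rw [hu] at this
  simpa using this

theorem exists_right_inv {E H : Type*} [NormedAddCommGroup E] [NormedSpace ℝ E]
    [NormedAddCommGroup H] [NormedSpace ℝ H] [FiniteDimensional ℝ H] {A : E →L[ℝ] H}
    (hs : Function.Surjective A) : ∃ R : H →L[ℝ] E, ∀ y, A (R y) = y := by
  obtain ⟨g, hg⟩ := LinearMap.exists_rightInverse_of_surjective (A : E →ₗ[ℝ] H)
    (LinearMap.range_eq_top.2 hs)
  refine ⟨LinearMap.toContinuousLinearMap g, fun y => ?_⟩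
  simpa using congrArg (fun g : H →ₗ[ℝ] H => g y) hg

/-- Surjectivity is stable. -/
theorem eventually_right_inv {X E H : Type*} [TopologicalSpace X]
    [NormedAddCommGroup E] [NormedSpace ℝ E]
    [NormedAddCommGroup H] [NormedSpace ℝ H] [CompleteSpace H] {A : X → E →L[ℝ] H} {R : H →L[ℝ] E}
    {t : X} (hA : ContinuousAt A t) (hR : ∀ y, A t (R y) = y) :
    ∀ᶠ x in 𝓝 t, ∃ R' : H →L[ℝ] E, ∀ y, A x (R' y) = y := by
  have hc : ContinuousAt (fun x => (A x).comp R) t := by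
    fun_prop
  have hu : IsUnit ((A t).comp R) := by
    have : (A t).comp R = 1 := by ext y; simp [hR]
    rw [this]; exact isUnit_one
  filter_upwards [hc.eventually (Units.isOpen.mem_nhds hu)] with x hx
  exact exists_right_inv_of_near hx

theorem LN_preimage {E H : Type*} [NormedAddCommGroup E] [NormedSpace ℝ E]
    [CompleteSpace E] [NormedAddCommGroup H] [NormedSpace ℝ H] [FiniteDimensional ℝ H]
    {Φ : E → H} {Φ' : E →L[ℝ] H} {t : E} (hΦ : ContDiffAt ℝ 1 Φ t)
    (hΦ' : HasFDerivAt Φ Φ' t) (hs : Function.Surjective Φ') {Γ : Set E} {Ω : Set H}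
    (hΓ : ∀ᶠ x in 𝓝 t, (x ∈ Γ ↔ Φ x ∈ Ω)) (f : E →L[ℝ] ℝ) :
    f ∈ LN Γ t ↔ ∃ g ∈ LN Ω (Φ t), f = g.comp Φ' := by
  have : CompleteSpace H := FiniteDimensional.complete ℝ H
  have e : fderiv ℝ Φ t = Φ' := hΦ'.fderiv
  have hcont : ContinuousAt (fderiv ℝ Φ) t := hΦ.continuousAt_fderiv (by norm_num)
  obtain ⟨R, hR⟩ := exists_right_inv hs
  have hstrict : HasStrictFDerivAt Φ Φ' t := by
    have := hΦ.hasStrictFDerivAt (by norm_num); rwa [e] at this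
  have hev := eventually_right_inv (R := R) hcont (by rw [e]; exact hR)
  have hev2 : ∀ᶠ x in 𝓝 t, HasStrictFDerivAt Φ (fderiv ℝ Φ x) x := by
    filter_upwards [hΦ.eventually (by simp)] with x hx
    exact hx.hasStrictFDerivAt (by norm_num)
  constructor
  · rintro ⟨xs, fs, h1, h2, h3, h4⟩
    have hall := h2.eventually ((hev.and hev2).and hΓ.eventually_nhds)
    obtain ⟨k0, hk0⟩ := eventually_atTop.1 hall
    have hex : ∀ k, ∃ g : H →L[ℝ] ℝ, FN Ω (Φ (xs (k + k0))) g ∧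
        fs (k + k0) = g.comp (fderiv ℝ Φ (xs (k + k0))) := by
      intro k
      obtain ⟨⟨⟨R', hR'⟩, hd⟩, hG⟩ := hk0 (k + k0) (by omega)
      exact ⟨_, FN_preimage hd hR' hG (h1 _) (h4 _)⟩
    choose gs hgs1 hgs2 using hex
    have t2 : Tendsto (fun k => xs (k + k0)) atTop (𝓝 t) := h2.comp (tendsto_add_atTop_nat k0)
    have t3 : Tendsto (fun k => fs (k + k0)) atTop (𝓝 f) := h3.comp (tendsto_add_atTop_nat k0)
    -- the operators `T k = fderiv Φ (x k) ∘ R` tend to one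
    have tT : Tendsto (fun k => (fderiv ℝ Φ (xs (k + k0))).comp R) atTop
        (𝓝 (ContinuousLinearMap.id ℝ H)) := by
      have hc : ContinuousAt (fun x => (fderiv ℝ Φ x).comp R) t := by fun_prop
      have := hc.tendsto.comp t2
      have e2 : (fderiv ℝ Φ t).comp R = ContinuousLinearMap.id ℝ H := by
        ext y; simp [e, hR]
      rw [e2] at this; exact this
    have tI : Tendsto (fun k => Ring.inverse ((fderiv ℝ Φ (xs (k + k0))).comp R)) atTop
        (𝓝 (1 : H →L[ℝ] H)) := by
      have := NormedRing.inverse_continuousAt (1 : (H →L[ℝ] H)ˣ)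
      have h := this.tendsto.comp tT
      rw [Units.val_one, Ring.inverse_one] at h
      exact h
    have hunit : ∀ᶠ k in atTop, IsUnit ((fderiv ℝ Φ (xs (k + k0))).comp R) :=
      tT.eventually (Units.isOpen.mem_nhds (isUnit_one (M := H →L[ℝ] H)))
    have tg : Tendsto gs atTop (𝓝 (f.comp R)) := by
      have tt : Tendsto (fun k => ((fs (k + k0)).comp R).comp
          (Ring.inverse ((fderiv ℝ Φ (xs (k + k0))).comp R))) atTop
          (𝓝 ((f.comp R).comp (1 : H →L[ℝ] H))) := by
        have c1 : Continuous (fun p : (E →L[ℝ] ℝ) × (H →L[ℝ] H) => (p.1.comp R).comp p.2) := by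
          fun_prop
        exact (c1.tendsto (f, 1)).comp (t3.prodMk_nhds tI)
      have e3 : (f.comp R).comp (1 : H →L[ℝ] H) = f.comp R := by ext; simp
      rw [e3] at tt
      refine tt.congr' ?_
      filter_upwards [hunit] with k hk
      have := Ring.mul_inverse_cancel _ hk
      rw [hgs2 k]
      ext y
      have := congrArg (fun g : H →L[ℝ] H => gs k (g y)) this
      simpa using this
    refine ⟨f.comp R, ⟨fun k => Φ (xs (k + k0)), gs, fun k => ?_, ?_, tg, hgs1⟩, ?_⟩
    · exact (hk0 (k + k0) (by omega)).2.self_of_nhds.1 (h1 _)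
    · exact hΦ.continuousAt.tendsto.comp t2
    · have c1 : Continuous (fun p : (H →L[ℝ] ℝ) × (E →L[ℝ] H) => p.1.comp p.2) := by fun_prop
      have := (c1.tendsto (f.comp R, fderiv ℝ Φ t)).comp
        (tg.prodMk_nhds (hcont.tendsto.comp t2))
      rw [← e]
      refine tendsto_nhds_unique t3 (this.congr fun k => ?_)
      simp [hgs2 k]
  · rintro ⟨g, ⟨zs, gs, h1, h2, h3, h4⟩, rfl⟩
    obtain ⟨N, hNt, hN, hlin⟩ := exists_linearization hstrict hR
    have hNc : Tendsto N (𝓝 t) (𝓝 t) := by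
      have := hN.continuousAt; unfold ContinuousAt at this; rwa [hNt] at this
    have hc : Tendsto (fun z => t + R (z - Φ t)) (𝓝 (Φ t)) (𝓝 t) := by
      have : Continuous (fun z => t + R (z - Φ t)) := by fun_prop
      have := this.tendsto (Φ t); simpa using this
    let xs : ℕ → E := fun k => N (t + R (zs k - Φ t))
    have hxs : Tendsto xs atTop (𝓝 t) := (hNc.comp hc).comp h2
    have hval : ∀ᶠ k in atTop, Φ (xs k) = zs k := by
      filter_upwards [(hc.comp h2).eventually hlin] with k hk
      simp only [Function.comp] at hk
      simp only [xs]
      rw [hk]; simp [hR]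
    have hall := (hval.and (hxs.eventually (hev2.and hΓ.eventually_nhds)))
    obtain ⟨k0, hk0⟩ := eventually_atTop.1 hall
    have t2 : Tendsto (fun k => xs (k + k0)) atTop (𝓝 t) := hxs.comp (tendsto_add_atTop_nat k0)
    have t3 : Tendsto (fun k => gs (k + k0)) atTop (𝓝 g) := h3.comp (tendsto_add_atTop_nat k0)
    refine ⟨fun k => xs (k + k0), fun k => (gs (k + k0)).comp (fderiv ℝ Φ (xs (k + k0))),
      fun k => ?_, t2, ?_, fun k => ?_⟩
    · obtain ⟨ha, hb, hc⟩ := hk0 (k + k0) (by omega)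
      exact hc.self_of_nhds.2 (by rw [ha]; exact h1 _)
    · have c1 : Continuous (fun p : (H →L[ℝ] ℝ) × (E →L[ℝ] H) => p.1.comp p.2) := by fun_prop
      have := (c1.tendsto (g, fderiv ℝ Φ t)).comp (t3.prodMk_nhds (hcont.tendsto.comp t2))
      rw [e] at this
      exact this
    · obtain ⟨ha, hb, hc⟩ := hk0 (k + k0) (by omega)
      refine FN_pull hb.hasFDerivAt (hc.mono fun y hy => hy.1) ?_
      rw [ha]; exact h4 _

theorem LN_prod_zero {X K : Type*} [NormedAddCommGroup X] [NormedSpace ℝ X]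
    [NormedAddCommGroup K] [NormedSpace ℝ K] {Ω : Set X} {x : X} (f : X × K →L[ℝ] ℝ) :
    f ∈ LN {p : X × K | p.1 ∈ Ω ∧ p.2 = 0} (x, 0) ↔
      f.comp (ContinuousLinearMap.inl ℝ X K) ∈ LN Ω x := by
  constructor
  · rintro ⟨xs, fs, h1, h2, h3, h4⟩
    refine ⟨fun k => (xs k).1, fun k => (fs k).comp (ContinuousLinearMap.inl ℝ X K),
      fun k => (h1 k).1, (continuous_fst.tendsto _).comp h2, ?_, fun k => ?_⟩
    · have c1 : Continuous (fun p : (X × K →L[ℝ] ℝ) =>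
          p.comp (ContinuousLinearMap.inl ℝ X K)) := by fun_prop
      exact (c1.tendsto f).comp h3
    · have e : xs k = ((xs k).1, 0) := Prod.ext rfl (h1 k).2
      have h := h4 k
      refine FN_pull (ContinuousLinearMap.inl ℝ X K).hasFDerivAt ?_ ?_
        (Γ := {p : X × K | p.1 ∈ Ω ∧ p.2 = 0})
      · exact Eventually.of_forall fun y hy => ⟨hy, rfl⟩
      · simpa [← e] using h
  · rintro ⟨xs, fs, h1, h2, h3, h4⟩
    refine ⟨fun k => (xs k, 0), fun k => (fs k).comp (ContinuousLinearMap.fst ℝ X K) +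
      (f.comp (ContinuousLinearMap.inr ℝ X K)).comp (ContinuousLinearMap.snd ℝ X K),
      fun k => ⟨h1 k, rfl⟩, h2.prodMk_nhds tendsto_const_nhds, ?_, fun k => ?_⟩
    · have c1 : Continuous (fun p : (X →L[ℝ] ℝ) => p.comp (ContinuousLinearMap.fst ℝ X K) +
        (f.comp (ContinuousLinearMap.inr ℝ X K)).comp (ContinuousLinearMap.snd ℝ X K)) := by
        fun_prop
      have := (c1.tendsto _).comp h3
      have e : f = (f.comp (ContinuousLinearMap.inl ℝ X K)).comp (ContinuousLinearMap.fst ℝ X K) +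
        (f.comp (ContinuousLinearMap.inr ℝ X K)).comp (ContinuousLinearMap.snd ℝ X K) := by
        apply ContinuousLinearMap.ext
        rintro ⟨y1, y2⟩
        simp [← map_add]
      rw [← e] at this
      exact this
    · have h := FN_pull (Ω := {p : X × K | p.1 ∈ Ω ∧ p.2 = 0})
        ((ContinuousLinearMap.fst ℝ X K).hasFDerivAt (x := (xs k, 0)))
        (Eventually.of_forall fun y hy => hy.1) (h4 k)
      intro ε hε
      filter_upwards [h ε hε] with y hy hyΩ
      have := hy hyΩ
      have e0 : f (0, (0 : K)) = 0 := map_zero f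
      simp only [ContinuousLinearMap.comp_apply, ContinuousLinearMap.coe_fst',
        add_apply, ContinuousLinearMap.coe_snd', Prod.snd_sub, hyΩ.2,
        ContinuousLinearMap.inr_apply, sub_zero, e0, add_zero] at this ⊢
      exact this

theorem LN_convex {E : Type*} [NormedAddCommGroup E] [NormedSpace ℝ E] {C : Set E}
    (hC : Convex ℝ C) {x : E} {f : E →L[ℝ] ℝ} (hf : f ∈ LN C x) {c : E} (hc : c ∈ C) :
    f (c - x) ≤ 0 := by
  obtain ⟨xs, fs, h1, h2, h3, h4⟩ := hf
  have key : ∀ k, fs k (c - xs k) ≤ 0 := by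
    intro k
    apply le_of_forall_pos_le_add
    intro ε hε
    rw [zero_add]
    have hn : 0 < ‖c - xs k‖ + 1 := by positivity
    have h := h4 k (ε / (‖c - xs k‖ + 1)) (by positivity)
    have ht : Tendsto (fun τ : ℝ => xs k + τ • (c - xs k)) (𝓝[>] 0) (𝓝 (xs k)) := by
      have : Continuous (fun τ : ℝ => xs k + τ • (c - xs k)) := by fun_prop
      have := this.tendsto 0
      simp only [zero_smul, add_zero] at this
      exact this.mono_left nhdsWithin_le_nhds
    have h1' : ∀ᶠ τ : ℝ in 𝓝[>] 0, τ < 1 := nhdsWithin_le_nhds (gt_mem_nhds (by norm_num))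
    obtain ⟨τ, ha, hb, hτ⟩ := ((ht.eventually h).and (h1'.and self_mem_nhdsWithin)).exists
    have hτ : 0 < τ := hτ
    have := ha (hC.add_smul_sub_mem (h1 k) hc ⟨hτ.le, hb.le⟩)
    rw [add_sub_cancel_left, map_smul, norm_smul, Real.norm_eq_abs, abs_of_pos hτ,
      smul_eq_mul] at this
    have h5 : fs k (c - xs k) ≤ ε / (‖c - xs k‖ + 1) * ‖c - xs k‖ := by
      by_contra hcon
      push Not at hcon
      nlinarith
    refine h5.trans ?_
    rw [div_mul_eq_mul_div, div_le_iff₀ hn]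
    nlinarith [norm_nonneg (c - xs k)]
  have c1 : Continuous (fun p : (E →L[ℝ] ℝ) × E => p.1 (c - p.2)) := by fun_prop
  exact le_of_tendsto' ((c1.tendsto (f, x)).comp (h3.prodMk_nhds h2)) key

/-- Transport of limiting normals in an `ℓ²`-product. -/
theorem limitingNormal_pl2 {X Y : Type*} [NormedAddCommGroup X] [InnerProductSpace ℝ X]
    [NormedAddCommGroup Y] [InnerProductSpace ℝ Y] [FiniteDimensional ℝ X]
    [FiniteDimensional ℝ Y] {Ω : Set (WithLp 2 (X × Y))} (a x : X) (b y : Y) :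
    pl2 a b ∈ limitingNormal Ω (pl2 x y) ↔
      ((innerSL ℝ a).comp (ContinuousLinearMap.fst ℝ X Y) +
        (innerSL ℝ b).comp (ContinuousLinearMap.snd ℝ X Y)) ∈
        LN {p : X × Y | pl2 p.1 p.2 ∈ Ω} (x, y) := by
  have := FiniteDimensional.complete ℝ X
  have := FiniteDimensional.complete ℝ Y
  let e := WithLp.prodContinuousLinearEquiv 2 ℝ X Y
  have hfd : FiniteDimensional ℝ (WithLp 2 (X × Y)) := e.symm.toLinearEquiv.finiteDimensional
  rw [limitingNormal_iff]
  have hkey := LN_preimage (t := (x, y)) (Φ := e.symm)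
    (Φ' := (e.symm : X × Y →L[ℝ] WithLp 2 (X × Y)))
    e.symm.contDiff.contDiffAt e.symm.hasFDerivAt e.symm.surjective
    (Γ := {p : X × Y | pl2 p.1 p.2 ∈ Ω}) (Ω := Ω) (Eventually.of_forall fun p => Iff.rfl)
  rw [hkey]
  constructor
  · intro h
    refine ⟨_, h, ?_⟩
    ext p <;> simp [e, pl2, WithLp.prod_inner_apply]
  · rintro ⟨g, hg, hh⟩
    have hgg : innerSL ℝ (pl2 a b) = g := by
      apply ContinuousLinearMap.ext
      intro q
      obtain ⟨p, rfl⟩ := e.symm.surjective q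
      have := congrArg (fun g : X × Y →L[ℝ] ℝ => g p) hh
      simp only [ContinuousLinearMap.comp_apply, ContinuousLinearEquiv.coe_coe] at this
      rw [← this]
      simp [e, pl2, WithLp.prod_inner_apply]
    rw [hgg]
    exact hg

/-! ### Local structure of CPWL functions -/

/-- The finite part of a CPWL function. -/
def fmax {m l : ℕ} (a : Fin l → Euc m) (α : Fin l → ℝ) (z : Euc m) : ℝ :=
  ⨆ i, (⟪a i, z⟫ - α i)

theorem le_fmax {m l : ℕ} (a : Fin l → Euc m) (α : Fin l → ℝ) (z : Euc m) (i : Fin l) :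
    ⟪a i, z⟫ - α i ≤ fmax a α z :=
  le_ciSup (f := fun i => ⟪a i, z⟫ - α i) (Finite.bddAbove_range _) i

theorem fmax_le {m l : ℕ} (hl : 0 < l) (a : Fin l → Euc m) (α : Fin l → ℝ) (z : Euc m) {c : ℝ}
    (h : ∀ i, ⟪a i, z⟫ - α i ≤ c) : fmax a α z ≤ c := by
  have : Nonempty (Fin l) := ⟨⟨0, hl⟩⟩
  exact ciSup_le h

theorem convex_cpwlDom {m p : ℕ} (d : Fin p → Euc m) (β : Fin p → ℝ) :
    Convex ℝ (cpwlDom d β) := by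
  intro x hx y hy s t hs ht hst i
  rw [inner_add_right, inner_smul_right, inner_smul_right]
  have h1 := mul_le_mul_of_nonneg_left (hx i) hs
  have h2 := mul_le_mul_of_nonneg_left (hy i) ht
  calc _ ≤ s * β i + t * β i := add_le_add h1 h2
    _ = β i := by rw [← add_mul, hst, one_mul]

theorem fmax_convex {m l : ℕ} (hl : 0 < l) (a : Fin l → Euc m) (α : Fin l → ℝ)
    {s t : ℝ} (x y : Euc m) (hs : 0 ≤ s) (ht : 0 ≤ t) (hst : s + t = 1) :
    fmax a α (s • x + t • y) ≤ s * fmax a α x + t * fmax a α y := by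
  apply fmax_le hl
  intro i
  rw [inner_add_right, inner_smul_right, inner_smul_right]
  have h1 := mul_le_mul_of_nonneg_left (le_fmax a α x i) hs
  have h2 := mul_le_mul_of_nonneg_left (le_fmax a α y i) ht
  have : α i = s * α i + t * α i := by rw [← add_mul, hst, one_mul]
  linarith

theorem cpwlFun_of_mem {m l p : ℕ} {a : Fin l → Euc m} {α : Fin l → ℝ} {d : Fin p → Euc m}
    {β : Fin p → ℝ} {z : Euc m} (h : z ∈ cpwlDom d β) :
    cpwlFun a α d β z = ((fmax a α z : ℝ) : EReal) := by
  unfold cpwlFun; rw [if_pos h]; rfl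

theorem cpwlFun_le_iff {m l p : ℕ} {a : Fin l → Euc m} {α : Fin l → ℝ} {d : Fin p → Euc m}
    {β : Fin p → ℝ} {z : Euc m} {r : ℝ} :
    cpwlFun a α d β z ≤ (r : EReal) ↔ z ∈ cpwlDom d β ∧ fmax a α z ≤ r := by
  by_cases h : z ∈ cpwlDom d β
  · rw [cpwlFun_of_mem h]; simp [h]
  · simp [cpwlFun, h]

theorem cpwlFun_eq_iff {m l p : ℕ} {a : Fin l → Euc m} {α : Fin l → ℝ} {d : Fin p → Euc m}
    {β : Fin p → ℝ} {z : Euc m} {r : ℝ} :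
    cpwlFun a α d β z = (r : EReal) ↔ z ∈ cpwlDom d β ∧ fmax a α z = r := by
  by_cases h : z ∈ cpwlDom d β
  · rw [cpwlFun_of_mem h]; simp [h]
  · simp [cpwlFun, h]

theorem mem_subdiff_iff {m l p : ℕ} {a : Fin l → Euc m} {α : Fin l → ℝ} {d : Fin p → Euc m}
    {β : Fin p → ℝ} (hdom : (cpwlDom d β).Nonempty) {z v : Euc m} :
    v ∈ subdiff (cpwlFun a α d β) z ↔
      z ∈ cpwlDom d β ∧ ∀ z' ∈ cpwlDom d β, fmax a α z + ⟪v, z' - z⟫ ≤ fmax a α z' := by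
  constructor
  · intro h
    have hz : z ∈ cpwlDom d β := by
      by_contra hz
      obtain ⟨z0, hz0⟩ := hdom
      have := h z0
      rw [cpwlFun_of_mem hz0] at this
      simp [cpwlFun, hz] at this
    refine ⟨hz, fun z' hz' => ?_⟩
    have := h z'
    rw [cpwlFun_of_mem hz, cpwlFun_of_mem hz'] at this
    exact_mod_cast this
  · rintro ⟨hz, h⟩ z'
    by_cases hz' : z' ∈ cpwlDom d β
    · rw [cpwlFun_of_mem hz, cpwlFun_of_mem hz']
      exact_mod_cast h z' hz'
    · simp [cpwlFun, hz']

theorem subdiff_of_local {m l p : ℕ} (hl : 0 < l) {a : Fin l → Euc m} {α : Fin l → ℝ}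
    {d : Fin p → Euc m} {β : Fin p → ℝ} (hdom : (cpwlDom d β).Nonempty) {z v : Euc m}
    (hz : z ∈ cpwlDom d β)
    (h : ∀ᶠ z' in 𝓝 z, z' ∈ cpwlDom d β → fmax a α z + ⟪v, z' - z⟫ ≤ fmax a α z') :
    v ∈ subdiff (cpwlFun a α d β) z := by
  rw [mem_subdiff_iff hdom]
  refine ⟨hz, fun z' hz' => ?_⟩
  have ht : Tendsto (fun τ : ℝ => (1 - τ) • z + τ • z') (𝓝[>] 0) (𝓝 z) := by
    have : Continuous (fun τ : ℝ => (1 - τ) • z + τ • z') := by fun_prop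
    have := this.tendsto 0
    simp only [zero_smul, add_zero, sub_zero, one_smul] at this
    exact this.mono_left nhdsWithin_le_nhds
  have h1' : ∀ᶠ τ : ℝ in 𝓝[>] 0, τ < 1 := nhdsWithin_le_nhds (gt_mem_nhds (by norm_num))
  obtain ⟨τ, ha, hb, hτ⟩ := ((ht.eventually h).and (h1'.and self_mem_nhdsWithin)).exists
  have hτ : 0 < τ := hτ
  have h2 := ha (convex_cpwlDom d β hz hz' (by linarith) hτ.le (by ring))
  have h3 := fmax_convex hl a α (s := 1 - τ) (t := τ) z z' (by linarith) hτ.le (by ring)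
  have e : (1 - τ) • z + τ • z' - z = τ • (z' - z) := by module
  rw [e, inner_smul_right] at h2
  by_contra hcon
  push Not at hcon
  nlinarith

theorem subdiff_congr_local {m l p : ℕ} (hl : 0 < l) {a : Fin l → Euc m} {α : Fin l → ℝ}
    {d : Fin p → Euc m} {β : Fin p → ℝ} (hdom : (cpwlDom d β).Nonempty) {z1 z2 v : Euc m} {c : ℝ}
    (h : ∀ᶠ ζ in 𝓝 (0 : Euc m), (z1 + ζ ∈ cpwlDom d β ↔ z2 + ζ ∈ cpwlDom d β) ∧
      fmax a α (z1 + ζ) = fmax a α (z2 + ζ) + c)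
    (hv : v ∈ subdiff (cpwlFun a α d β) z1) : v ∈ subdiff (cpwlFun a α d β) z2 := by
  rw [mem_subdiff_iff hdom] at hv
  have h0 := h.self_of_nhds
  simp only [add_zero] at h0
  apply subdiff_of_local hl hdom (h0.1.1 hv.1)
  have ht : Tendsto (fun z' => z' - z2) (𝓝 z2) (𝓝 0) := by
    have : Continuous (fun z' => z' - z2) := by fun_prop
    simpa using this.tendsto z2
  filter_upwards [ht.eventually h] with z' hz' hd
  rw [add_sub_cancel] at hz'
  have := hv.2 _ (hz'.1.2 hd)
  rw [hz'.2, h0.2, add_sub_cancel_left] at this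
  linarith

section
variable {m l p : ℕ} {a : Fin l → Euc m} {α : Fin l → ℝ} {d : Fin p → Euc m}
    {β : Fin p → ℝ} {zb vb : Euc m}

theorem sub_mem_Spar {v w : Euc m} (hv : v ∈ subdiff (cpwlFun a α d β) zb)
    (hw : w ∈ subdiff (cpwlFun a α d β) zb) : v - w ∈ Spar (cpwlFun a α d β) zb := by
  unfold Spar
  rw [direction_affineSpan]
  exact vsub_mem_vectorSpan ℝ hv hw

/-- Projection onto the affine space `zb + S`. -/
def prS (S : Submodule ℝ (Euc m)) (zb z : Euc m) : Euc m :=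
  zb + S.starProjection (z - zb)

theorem continuous_prS (S : Submodule ℝ (Euc m)) : Continuous (prS S zb) := by
  unfold prS; fun_prop

theorem prS_self (S : Submodule ℝ (Euc m)) : prS S zb zb = zb := by simp [prS]

theorem tendsto_prS (S : Submodule ℝ (Euc m)) : Tendsto (prS S zb) (𝓝 zb) (𝓝 zb) := by
  have := (continuous_prS (zb := zb) S).tendsto zb
  rwa [prS_self] at this

theorem sub_prS_mem (S : Submodule ℝ (Euc m)) (z : Euc m) : z - prS S zb z ∈ Sᗮ := by
  have : z - prS S zb z = (z - zb) - S.starProjection (z - zb) := by unfold prS; abel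
  rw [this]
  exact Submodule.sub_starProjection_mem_orthogonal _

theorem prS_add (S : Submodule ℝ (Euc m)) (z s : Euc m) (hs : s ∈ Sᗮ) :
    prS S zb (z + s) = prS S zb z := by
  unfold prS
  have : z + s - zb = (z - zb) + s := by abel
  rw [this, map_add, (Submodule.starProjection_apply_eq_zero_iff S).2 hs, add_zero]

theorem local_structure (hl : 0 < l) (hdom : (cpwlDom d β).Nonempty)
    (hvb : vb ∈ subdiff (cpwlFun a α d β) zb) :
    ∀ᶠ z in 𝓝 zb, (z ∈ cpwlDom d β ↔
        prS (Spar (cpwlFun a α d β) zb) zb z ∈ cpwlDom d β) ∧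
      fmax a α z = fmax a α (prS (Spar (cpwlFun a α d β) zb) zb z) +
        ⟪vb, z - prS (Spar (cpwlFun a α d β) zb) zb z⟫ := by
  set S := Spar (cpwlFun a α d β) zb with hS
  have hzb := ((mem_subdiff_iff hdom).1 hvb).1
  have : Nonempty (Fin l) := ⟨⟨0, hl⟩⟩
  obtain ⟨i0, hi0⟩ := Finite.exists_max (fun i => ⟪a i, zb⟫ - α i)
  have hf0 : fmax a α zb = ⟪a i0, zb⟫ - α i0 :=
    le_antisymm (fmax_le hl _ _ _ hi0) (le_fmax _ _ _ _)
  have hact : ∀ i, ⟪a i, zb⟫ - α i = ⟪a i0, zb⟫ - α i0 → a i ∈ subdiff (cpwlFun a α d β) zb := by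
    intro i hi
    rw [mem_subdiff_iff hdom]
    refine ⟨hzb, fun z' _ => ?_⟩
    have := le_fmax a α z' i
    rw [hf0, ← hi, inner_sub_right]
    linarith
  have hactd : ∀ k, ⟪d k, zb⟫ = β k → a i0 + d k ∈ subdiff (cpwlFun a α d β) zb := by
    intro k hk
    rw [mem_subdiff_iff hdom]
    refine ⟨hzb, fun z' hz' => ?_⟩
    have := le_fmax a α z' i0
    have h2 : ⟪d k, z'⟫ ≤ β k := hz' k
    rw [hf0, inner_sub_right, inner_add_left, inner_add_left]
    linarith
  have hSa : ∀ i, ⟪a i, zb⟫ - α i = ⟪a i0, zb⟫ - α i0 → a i - vb ∈ S := fun i hi =>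
    sub_mem_Spar (hact i hi) hvb
  have hSd : ∀ k, ⟪d k, zb⟫ = β k → d k ∈ S := fun k hk => by
    have := sub_mem_Spar (hactd k hk) (hact i0 rfl)
    rwa [add_sub_cancel_left] at this
  have ev1 : ∀ᶠ z in 𝓝 zb, ∀ k, ⟪d k, zb⟫ ≠ β k → ⟪d k, z⟫ < β k := by
    rw [eventually_all]
    intro k
    by_cases hk : ⟪d k, zb⟫ = β k
    · exact Eventually.of_forall fun z h => (h hk).elim
    · have hc : Continuous (fun z : Euc m => ⟪d k, z⟫) := by fun_prop
      have h1 : ⟪d k, zb⟫ ≤ β k := hzb k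
      filter_upwards [(hc.tendsto zb).eventually (gt_mem_nhds (lt_of_le_of_ne h1 hk))] with z hz _
      exact hz
  have ev2 : ∀ᶠ z in 𝓝 zb, ∀ i, ⟪a i, zb⟫ - α i ≠ ⟪a i0, zb⟫ - α i0 →
      ⟪a i, z⟫ - α i ≤ ⟪a i0, z⟫ - α i0 := by
    rw [eventually_all]
    intro i
    by_cases hk : ⟪a i, zb⟫ - α i = ⟪a i0, zb⟫ - α i0
    · exact Eventually.of_forall fun z h => (h hk).elim
    · have hc : Continuous (fun z : Euc m => (⟪a i0, z⟫ - α i0) - (⟪a i, z⟫ - α i)) := by fun_prop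
      have h1 : 0 < (⟪a i0, zb⟫ - α i0) - (⟪a i, zb⟫ - α i) :=
        sub_pos.2 (lt_of_le_of_ne (hi0 i) hk)
      filter_upwards [(hc.tendsto zb).eventually (lt_mem_nhds h1)] with z hz _
      linarith
  have tp := tendsto_prS (zb := zb) S
  filter_upwards [ev1, ev2, tp.eventually ev1, tp.eventually ev2] with z h1 h2 h3 h4
  have hsz := sub_prS_mem (zb := zb) S z
  generalize prS S zb z = z' at *
  have inn : ∀ y ∈ S, ⟪y, z⟫ = ⟪y, z'⟫ := by
    intro y hy
    have := Submodule.inner_right_of_mem_orthogonal hy hsz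
    rw [inner_sub_right] at this
    linarith
  have inna : ∀ i, ⟪a i, zb⟫ - α i = ⟪a i0, zb⟫ - α i0 →
      ⟪a i, z⟫ - α i = ⟪a i, z'⟫ - α i + ⟪vb, z - z'⟫ := by
    intro i hi
    have := inn _ (hSa i hi)
    rw [inner_sub_left, inner_sub_left] at this
    rw [inner_sub_right]
    linarith
  constructor
  · constructor
    · intro hz k
      by_cases hk : ⟪d k, zb⟫ = β k
      · rw [← inn _ (hSd k hk)]; exact hz k
      · exact (h3 k hk).le
    · intro hz k
      by_cases hk : ⟪d k, zb⟫ = β k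
      · rw [inn _ (hSd k hk)]; exact hz k
      · exact (h1 k hk).le
  · apply le_antisymm
    · apply fmax_le hl
      intro i
      by_cases hi : ⟪a i, zb⟫ - α i = ⟪a i0, zb⟫ - α i0
      · rw [inna i hi]
        linarith [le_fmax a α z' i]
      · refine (h2 i hi).trans ?_
        rw [inna i0 rfl]
        linarith [le_fmax a α z' i0]
    · rw [← le_sub_iff_add_le]
      apply fmax_le hl
      intro i
      by_cases hi : ⟪a i, zb⟫ - α i = ⟪a i0, zb⟫ - α i0
      · have := inna i hi
        linarith [le_fmax a α z i]
      · refine (h4 i hi).trans ?_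
        have := inna i0 rfl
        linarith [le_fmax a α z i0]

theorem local_subdiff (hl : 0 < l) (hdom : (cpwlDom d β).Nonempty)
    (hvb : vb ∈ subdiff (cpwlFun a α d β) zb) :
    ∀ᶠ z in 𝓝 zb, ∀ v, v ∈ subdiff (cpwlFun a α d β) z ↔
      (v - vb ∈ Spar (cpwlFun a α d β) zb ∧
        v ∈ subdiff (cpwlFun a α d β) (prS (Spar (cpwlFun a α d β) zb) zb z)) := by
  have hloc := local_structure hl hdom hvb
  set S := Spar (cpwlFun a α d β) zb with hS
  have tp := tendsto_prS (zb := zb) S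
  filter_upwards [hloc.eventually_nhds, tp.eventually hloc.eventually_nhds] with z h1 h2 v
  have ht : ∀ y : Euc m, Tendsto (fun ζ => y + ζ) (𝓝 0) (𝓝 y) := by
    intro y
    have : Continuous (fun ζ => y + ζ) := by fun_prop
    simpa using this.tendsto 0
  have hs := sub_prS_mem (zb := zb) S z
  have hpp : ∀ ζ, prS S zb (z + ζ) = prS S zb (prS S zb z + ζ) := by
    intro ζ
    have : z + ζ = (prS S zb z + ζ) + (z - prS S zb z) := by abel
    rw [this, prS_add S _ _ hs]
  have hev : ∀ᶠ ζ in 𝓝 (0 : Euc m), (z + ζ ∈ cpwlDom d β ↔ prS S zb z + ζ ∈ cpwlDom d β) ∧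
      fmax a α (z + ζ) = fmax a α (prS S zb z + ζ) + ⟪vb, z - prS S zb z⟫ := by
    filter_upwards [(ht z).eventually h1, (ht (prS S zb z)).eventually h2] with ζ k1 k2
    rw [k1.1, k2.1, k1.2, k2.2, hpp]
    refine ⟨Iff.rfl, ?_⟩
    rw [add_assoc, ← inner_add_right]
    congr 2
    abel
  constructor
  · intro hv
    refine ⟨?_, subdiff_congr_local hl hdom hev hv⟩
    rw [← Submodule.orthogonal_orthogonal S, Submodule.mem_orthogonal]
    intro s hs'
    have hle : ∀ s ∈ Sᗮ, ⟪v - vb, s⟫ ≤ 0 := by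
      intro s hs'
      have ht2 : Tendsto (fun τ : ℝ => z + τ • s) (𝓝[>] 0) (𝓝 z) := by
        have : Continuous (fun τ : ℝ => z + τ • s) := by fun_prop
        have := this.tendsto 0
        simp only [zero_smul, add_zero] at this
        exact this.mono_left nhdsWithin_le_nhds
      obtain ⟨τ, k1, hτ⟩ := ((ht2.eventually h1).and self_mem_nhdsWithin).exists
      have hτ : 0 < τ := hτ
      have k0 := h1.self_of_nhds
      rw [prS_add S _ _ (Submodule.smul_mem _ _ hs')] at k1
      obtain ⟨hz, hv2⟩ := (mem_subdiff_iff hdom).1 hv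
      have := hv2 _ (k1.1.2 (k0.1.1 hz))
      rw [k1.2, k0.2, add_sub_cancel_left, add_sub_right_comm, inner_add_right,
        inner_smul_right, inner_smul_right] at this
      rw [inner_sub_left]
      by_contra hcon
      push Not at hcon
      nlinarith
    have l1 := hle s hs'
    have l2 := hle (-s) (Submodule.neg_mem _ hs')
    rw [inner_neg_right] at l2
    rw [real_inner_comm]
    linarith
  · rintro ⟨_, hv⟩
    refine subdiff_congr_local hl hdom (c := -⟪vb, z - prS S zb z⟫) ?_ hv
    filter_upwards [hev] with ζ k
    exact ⟨k.1.symm, by linarith [k.2]⟩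

end

/-! ### First-order chain rule and the two graph descriptions -/

section
variable {n dd m l p : ℕ} {a : Fin l → Euc m} {α : Fin l → ℝ} {d : Fin p → Euc m}
    {β : Fin p → ℝ} {zb vb : Euc m}

theorem prS_eq (S : Submodule ℝ (Euc m)) (z : Euc m) :
    prS S zb z = zb + (S.orthogonalProjectionOnto (z - zb) : Euc m) := by
  rw [prS, Submodule.starProjection_apply]

theorem partial_iff (hl : 0 < l) (hdom : (cpwlDom d β).Nonempty) (S : Submodule ℝ (Euc m))
    (ψ : Euc n → Euc dd → EReal) (φ : Euc n → Euc m) (x : Euc n) (w : Euc dd)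
    (hψ : ∀ x', ψ x' w = cpwlFun a α d β (φ x'))
    (hφ : ContDiffAt ℝ 1 φ x)
    (hs : Function.Surjective (S.orthogonalProjectionOnto.comp (fderiv ℝ φ x)))
    (hloc : ∀ᶠ z in 𝓝 (φ x), (z ∈ cpwlDom d β ↔ prS S zb z ∈ cpwlDom d β) ∧
      fmax a α z = fmax a α (prS S zb z) + ⟪vb, z - prS S zb z⟫) (q : Euc n) :
    q ∈ partialSubdiffX ψ x w ↔ ∃ v ∈ subdiff (cpwlFun a α d β) (φ x),
      ContinuousLinearMap.adjoint (fderiv ℝ φ x) v = q := by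
  set A := fderiv ℝ φ x with hAdef
  have hA : HasFDerivAt φ A x := (hφ.differentiableAt (by norm_num)).hasFDerivAt
  have hset : {p : Euc n × ℝ | pl2 p.1 p.2 ∈ {q : WithLp 2 (Euc n × ℝ) |
        ψ ((WithLp.equiv 2 (Euc n × ℝ)) q).1 w ≤
          ((((WithLp.equiv 2 (Euc n × ℝ)) q).2 : ℝ) : EReal)}} =
      {p : Euc n × ℝ | φ p.1 ∈ cpwlDom d β ∧ fmax a α (φ p.1) ≤ p.2} := by
    ext p
    show ψ p.1 w ≤ (p.2 : EReal) ↔ _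
    rw [hψ, cpwlFun_le_iff]; rfl
  have hA' : ∀ r : ℝ, HasFDerivAt (fun p : Euc n × ℝ => φ p.1)
      (A.comp (ContinuousLinearMap.fst ℝ (Euc n) ℝ)) (x, r) := fun r =>
    HasFDerivAt.comp (x, r) (show HasFDerivAt φ A (x, r).1 from hA) hasFDerivAt_fst
  constructor
  · rintro ⟨r, hr, hN⟩
    rw [limitingNormal_pl2, hset] at hN
    rw [hψ, cpwlFun_eq_iff] at hr
    let T := S.orthogonalProjectionOnto
    let L : Euc m →L[ℝ] ℝ :=
      (innerSL ℝ vb).comp (ContinuousLinearMap.id ℝ (Euc m) - S.starProjection)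
    have hL : ∀ z, ⟪vb, z - prS S zb z⟫ = L (z - zb) := by
      intro z
      have : z - prS S zb z = (z - zb) - S.starProjection (z - zb) := by unfold prS; abel
      rw [this]; rfl
    let Fm : Euc n × ℝ → S × ℝ := fun p => (T (φ p.1 - zb), p.2 - L (φ p.1 - zb))
    let Fm' : Euc n × ℝ →L[ℝ] S × ℝ :=
      (T.comp (A.comp (ContinuousLinearMap.fst ℝ (Euc n) ℝ))).prod
        (ContinuousLinearMap.snd ℝ (Euc n) ℝ -
          L.comp (A.comp (ContinuousLinearMap.fst ℝ (Euc n) ℝ)))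
    have hF' : HasFDerivAt Fm Fm' (x, r) :=
      (T.hasFDerivAt.comp (x, r) ((hA' r).sub_const zb)).prodMk
        (hasFDerivAt_snd.sub (L.hasFDerivAt.comp (x, r) ((hA' r).sub_const zb)))
    have hFc : ContDiffAt ℝ 1 Fm (x, r) := by
      have h1 : ContDiffAt ℝ 1 (fun p : Euc n × ℝ => φ p.1 - zb) (x, r) :=
        (ContDiffAt.comp (x, r) (show ContDiffAt ℝ 1 φ (x, r).1 from hφ) contDiffAt_fst).sub
          contDiffAt_const
      exact (T.contDiff.contDiffAt.comp (x, r) h1).prodMk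
        (contDiffAt_snd.sub (L.contDiff.contDiffAt.comp (x, r) h1))
    have hFs : Function.Surjective Fm' := by
      rintro ⟨s, ρ⟩
      obtain ⟨h, hh⟩ := hs s
      refine ⟨(h, ρ + L (A h)), ?_⟩
      simp only [ContinuousLinearMap.comp_apply] at hh
      simp [Fm', T, hh]
    have hΓ : ∀ᶠ p in 𝓝 (x, r), (p ∈ {p : Euc n × ℝ | φ p.1 ∈ cpwlDom d β ∧
        fmax a α (φ p.1) ≤ p.2} ↔ Fm p ∈ {t : S × ℝ | zb + (t.1 : Euc m) ∈ cpwlDom d β ∧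
        fmax a α (zb + (t.1 : Euc m)) ≤ t.2}) := by
      have := (hA' r).continuousAt.eventually hloc
      filter_upwards [this] with p hp
      simp only [Set.mem_ofPred_eq, Fm, T]
      rw [← prS_eq, hp.1, hp.2, hL, le_sub_iff_add_le]
    obtain ⟨g, hg, heq⟩ := (LN_preimage hFc hF' hFs hΓ _).1 hN
    have hev : ∀ h ρ, ⟪q, h⟫ - ρ = g (T (A h), ρ - L (A h)) := by
      intro h ρ
      have := congrArg (fun g : Euc n × ℝ →L[ℝ] ℝ => g (h, ρ)) heq
      simpa [Fm', sub_eq_add_neg] using this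
    have hg1 : ∀ ρ, g (0, ρ) = -ρ := by
      intro ρ
      have := hev 0 ρ
      simp at this
      exact this.symm
    have hg2 : ∀ s ρ, g (s, ρ) = g (s, 0) - ρ := by
      intro s ρ
      rw [sub_eq_add_neg, ← hg1, ← map_add]; simp
    let v : Euc m := (InnerProductSpace.toDual ℝ (Euc m)).symm
      ((g.comp (ContinuousLinearMap.inl ℝ S ℝ)).comp T + L)
    have hv : ∀ z, ⟪v, z⟫ = g (T z, 0) + L z := by
      intro z
      simp only [v, InnerProductSpace.toDual_symm_apply]; rfl
    refine ⟨v, ?_, ?_⟩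
    · apply subdiff_of_local hl hdom hr.1
      filter_upwards [hloc] with z' hz' hd
      have hconv : Convex ℝ {t : S × ℝ | zb + (t.1 : Euc m) ∈ cpwlDom d β ∧
          fmax a α (zb + (t.1 : Euc m)) ≤ t.2} := by
        rintro t1 ⟨h1, h2⟩ t2 ⟨h3, h4⟩ σ τ hσ hτ hστ
        have e : zb + ((σ • t1 + τ • t2).1 : Euc m) =
            σ • (zb + (t1.1 : Euc m)) + τ • (zb + (t2.1 : Euc m)) := by
          have : zb = σ • zb + τ • zb := by rw [← add_smul, hστ, one_smul]
          conv_lhs => rw [this]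
          simp only [Prod.fst_add, Prod.smul_fst, Submodule.coe_add, Submodule.coe_smul]
          module
        refine ⟨?_, ?_⟩
        · rw [e]; exact convex_cpwlDom d β h1 h3 hσ hτ hστ
        · rw [e]
          refine (fmax_convex hl a α _ _ hσ hτ hστ).trans ?_
          simp only [Prod.snd_add, Prod.smul_snd, smul_eq_mul]
          gcongr
      have hmem : (T (z' - zb), fmax a α (prS S zb z')) ∈
          {t : S × ℝ | zb + (t.1 : Euc m) ∈ cpwlDom d β ∧
          fmax a α (zb + (t.1 : Euc m)) ≤ t.2} := by
        have : zb + ((T (z' - zb) : S) : Euc m) = prS S zb z' := (prS_eq S z').symm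
        refine ⟨?_, ?_⟩
        · show zb + ((T (z' - zb) : S) : Euc m) ∈ _
          rw [this]; exact hz'.1.1 hd
        · show fmax a α (zb + ((T (z' - zb) : S) : Euc m)) ≤ _
          rw [this]
      have := LN_convex hconv hg hmem
      have e : (T (z' - zb), fmax a α (prS S zb z')) - Fm (x, r) =
          (T (z' - φ x), fmax a α (prS S zb z') - (r - L (φ x - zb))) := by
        simp only [Fm, Prod.mk_sub_mk]
        rw [← map_sub]; simp
      rw [e, hg2] at this
      have e2 : L (z' - φ x) = L (z' - zb) - L (φ x - zb) := by
        rw [← map_sub]; congr 1; abel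
      rw [hz'.2, hL, hv, hr.2, e2]
      linarith
    · apply ext_inner_right ℝ
      intro h
      rw [ContinuousLinearMap.adjoint_inner_left, hv]
      have := hev h (L (A h))
      simp only [sub_self] at this
      rw [← this]; ring
  · rintro ⟨v, hv, hq⟩
    obtain ⟨hz, hv⟩ := (mem_subdiff_iff hdom).1 hv
    refine ⟨fmax a α (φ x), by rw [hψ, cpwlFun_of_mem hz], ?_⟩
    rw [limitingNormal_pl2, hset]
    refine ⟨fun _ => (x, fmax a α (φ x)), fun _ => _, fun _ => ⟨hz, le_rfl⟩, tendsto_const_nhds,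
      tendsto_const_nhds, fun _ => ?_⟩
    have hFN : FN {t : Euc m × ℝ | t.1 ∈ cpwlDom d β ∧ fmax a α t.1 ≤ t.2}
        (φ x, fmax a α (φ x)) ((innerSL ℝ v).comp (ContinuousLinearMap.fst ℝ (Euc m) ℝ) -
          ContinuousLinearMap.snd ℝ (Euc m) ℝ) := by
      intro ε hε
      refine Eventually.of_forall ?_
      rintro t ⟨h1, h2⟩
      have h3 := hv _ h1
      have h4 : 0 ≤ ε * ‖t - (φ x, fmax a α (φ x))‖ := by positivity
      simp only [sub_apply, ContinuousLinearMap.comp_apply,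
        ContinuousLinearMap.coe_fst', ContinuousLinearMap.coe_snd', Prod.fst_sub, Prod.snd_sub,
        innerSL_apply_apply]
      linarith
    have := FN_pull (Ω := {p : Euc n × ℝ | φ p.1 ∈ cpwlDom d β ∧ fmax a α (φ p.1) ≤ p.2})
      ((hA' (fmax a α (φ x))).prodMk hasFDerivAt_snd)
      (Eventually.of_forall fun p hp => hp) hFN
    convert this using 1
    apply ContinuousLinearMap.ext
    rintro ⟨h, ρ⟩
    simp [← hq, ContinuousLinearMap.adjoint_inner_left, sub_eq_add_neg]

/-- The reduced graph in `S × S`. -/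
def Ωred (θ : Euc m → EReal) (zb vb : Euc m) (S : Submodule ℝ (Euc m)) : Set (S × S) :=
  {t | vb + (t.2 : Euc m) ∈ subdiff θ (zb + (t.1 : Euc m))}

theorem sosd_iff (S : Submodule ℝ (Euc m)) {θ : Euc m → EReal}
    (hloc : ∀ᶠ z in 𝓝 zb, ∀ v, v ∈ subdiff θ z ↔
      (v - vb ∈ S ∧ v ∈ subdiff θ (prS S zb z))) (u' y : Euc m) :
    y ∈ sosd θ zb vb u' ↔ ∃ g ∈ LN (Ωred θ zb vb S) (0, 0),
      (∀ ζ, ⟪y, ζ⟫ = g (S.orthogonalProjectionOnto ζ, 0)) ∧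
      ∀ c : S, -⟪u', (c : Euc m)⟫ = g (0, c) := by
  let T := S.orthogonalProjectionOnto
  let T' := Sᗮ.orthogonalProjectionOnto
  have hTS : ∀ c : S, T (c : Euc m) = c := fun c => by simp [T]
  have hTS' : ∀ c : S, T' (c : Euc m) = 0 := fun c => by
    rw [Submodule.orthogonalProjectionOnto_eq_zero_iff]
    rw [Submodule.orthogonal_orthogonal]; exact c.2
  have hTP : ∀ c : Sᗮ, T (c : Euc m) = 0 := fun c => by
    rw [Submodule.orthogonalProjectionOnto_eq_zero_iff]; exact c.2
  have hTP' : ∀ c : Sᗮ, T' (c : Euc m) = c := fun c => by simp [T']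
  have hdec : ∀ z, (T z : Euc m) + (T' z : Euc m) = z := fun z => by
    have := S.starProjection_add_starProjection_orthogonal z
    simpa only [Submodule.starProjection_apply] using this
  show pl2 y (-u') ∈ limitingNormal _ (pl2 zb vb) ↔ _
  rw [limitingNormal_pl2]
  let G' : Euc m × Euc m →L[ℝ] (S × S) × Sᗮ :=
    ((T.comp (ContinuousLinearMap.fst ℝ _ _)).prod (T.comp (ContinuousLinearMap.snd ℝ _ _))).prod
      (T'.comp (ContinuousLinearMap.snd ℝ _ _))
  let Gm : Euc m × Euc m → (S × S) × Sᗮ := fun t => G' (t - (zb, vb))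
  have hG : HasFDerivAt Gm G' (zb, vb) := by
    have : HasFDerivAt (fun t => G' t - G' (zb, vb)) G' (zb, vb) := G'.hasFDerivAt.sub_const _
    simpa only [Gm, map_sub] using this
  have hGc : ContDiffAt ℝ 1 Gm (zb, vb) :=
    (G'.contDiff.comp (contDiff_id.sub contDiff_const)).contDiffAt
  have hGs : Function.Surjective G' := by
    rintro ⟨⟨s, c⟩, k⟩
    refine ⟨((s : Euc m), (c : Euc m) + (k : Euc m)), ?_⟩
    simp [G', hTS, hTS', hTP, hTP']
  have hG0 : Gm (zb, vb) = ((0, 0), 0) := by simp only [Gm, sub_self, map_zero]; rfl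
  have hΓ : ∀ᶠ t in 𝓝 (zb, vb), (t ∈ {p : Euc m × Euc m | pl2 p.1 p.2 ∈
      {q : WithLp 2 (Euc m × Euc m) | ((WithLp.equiv 2 (Euc m × Euc m)) q).2 ∈
        subdiff θ ((WithLp.equiv 2 (Euc m × Euc m)) q).1}} ↔
      Gm t ∈ {r : (S × S) × Sᗮ | r.1 ∈ Ωred θ zb vb S ∧ r.2 = 0}) := by
    have := (continuous_fst.tendsto (zb, vb)).eventually hloc
    filter_upwards [this] with t ht
    show t.2 ∈ subdiff θ t.1 ↔ vb + ((T (t.2 - vb) : S) : Euc m) ∈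
      subdiff θ (zb + ((T (t.1 - zb) : S) : Euc m)) ∧ T' (t.2 - vb) = 0
    rw [ht, prS_eq]
    have hd := hdec (t.2 - vb)
    constructor
    · rintro ⟨h1, h2⟩
      have h3 : T' (t.2 - vb) = 0 := hTS' ⟨_, h1⟩
      refine ⟨?_, h3⟩
      rw [h3] at hd
      simp only [Submodule.coe_zero, add_zero] at hd
      rw [hd, add_sub_cancel]; exact h2
    · rintro ⟨h1, h2⟩
      rw [h2] at hd
      simp only [Submodule.coe_zero, add_zero] at hd
      refine ⟨?_, ?_⟩
      · rw [← hd]; exact (T (t.2 - vb)).2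
      · rw [hd, add_sub_cancel] at h1; exact h1
  have hkey := fun f => LN_preimage hGc hG hGs hΓ f
  rw [hkey, hG0]
  constructor
  · rintro ⟨g, hg, heq⟩
    rw [LN_prod_zero] at hg
    have hev : ∀ ζ η, ⟪y, ζ⟫ - ⟪u', η⟫ = g ((T ζ, T η), T' η) := by
      intro ζ η
      have := congrArg (fun g : Euc m × Euc m →L[ℝ] ℝ => g (ζ, η)) heq
      simpa [G', sub_eq_add_neg] using this
    refine ⟨_, hg, fun ζ => ?_, fun c => ?_⟩
    · have := hev ζ 0
      simpa using this
    · have := hev 0 c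
      rw [hTS, hTS'] at this
      simpa using this
  · rintro ⟨g, hg, h1, h2⟩
    refine ⟨g.comp (ContinuousLinearMap.fst ℝ _ _) -
      ((innerSL ℝ u').comp Sᗮ.subtypeL).comp (ContinuousLinearMap.snd ℝ _ _), ?_, ?_⟩
    · rw [LN_prod_zero]
      convert hg using 1
      apply ContinuousLinearMap.ext
      intro t; simp
    · apply ContinuousLinearMap.ext
      rintro ⟨ζ, η⟩
      have e : g (T ζ, T η) = g (T ζ, 0) + g (0, T η) := by rw [← map_add]; simp
      have hd : ⟪u', η⟫ = ⟪u', (T η : Euc m)⟫ + ⟪u', (T' η : Euc m)⟫ := by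
        rw [← inner_add_right, hdec]
      have : g (T ζ, T η) - ⟪u', (T' η : Euc m)⟫ = ⟪y, ζ⟫ - ⟪u', η⟫ := by
        rw [e, ← h1, ← h2, hd]; ring
      simp only [ContinuousLinearMap.comp_apply, add_apply, sub_apply,
        ContinuousLinearMap.coe_fst', ContinuousLinearMap.coe_snd', innerSL_apply_apply, G',
        ContinuousLinearMap.prod_apply, Submodule.subtypeL_apply, inner_neg_left]
      rw [← sub_eq_add_neg]
      exact this.symm

end

/-! ### The coderivative of the partial subdifferential -/

section
variable {n dd m : ℕ}

/-- The adjoint as a continuous linear map. -/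
def adjL (n m : ℕ) : (Euc n →L[ℝ] Euc m) →L[ℝ] (Euc m →L[ℝ] Euc n) :=
  LinearMap.mkContinuous
    { toFun := fun A => ContinuousLinearMap.adjoint A
      map_add' := fun A B => map_add _ A B
      map_smul' := fun c A => by simp } 1 (fun A => by simp)

theorem adjL_apply (A : Euc n →L[ℝ] Euc m) : adjL n m A = ContinuousLinearMap.adjoint A := rfl

theorem inner_adjL (A : Euc n →L[ℝ] Euc m) (x : Euc n) (y : Euc m) :
    ⟪x, adjL n m A y⟫ = ⟪A x, y⟫ := by
  rw [adjL_apply, ContinuousLinearMap.adjoint_inner_right]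

theorem adjL_inner (A : Euc n →L[ℝ] Euc m) (x : Euc n) (y : Euc m) :
    ⟪adjL n m A y, x⟫ = ⟪y, A x⟫ := by
  rw [adjL_apply, ContinuousLinearMap.adjoint_inner_left]

theorem inner_proj (S : Submodule ℝ (Euc m)) (c : S) (z : Euc m) :
    ⟪(c : Euc m), z⟫ = ⟪c, S.orthogonalProjectionOnto z⟫ := by
  rw [Submodule.inner_orthogonalProjectionOnto_eq_of_mem_left]

theorem adj_inj (S : Submodule ℝ (Euc m)) (A : Euc n →L[ℝ] Euc m)
    (hs : Function.Surjective (S.orthogonalProjectionOnto.comp A)) (c : S)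
    (hc : adjL n m A c = 0) : c = 0 := by
  obtain ⟨h, hh⟩ := hs c
  have h2 : ⟪(c : Euc m), A h⟫ = ⟪c, c⟫ := by
    rw [inner_proj, ← ContinuousLinearMap.comp_apply, hh]
  have : ⟪c, c⟫ = 0 := by
    rw [← h2, ← adjL_inner, hc, inner_zero_left]
  exact inner_self_eq_zero.1 this

set_option maxHeartbeats 2000000 in
theorem coderiv_core (S : Submodule ℝ (Euc m)) (θ : Euc m → EReal)
    (ψ : Euc n → Euc dd → EReal) (Φ : Euc n × Euc dd → Euc m) (pb : Euc n × Euc dd)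
    (vb : Euc m) (qb : Euc n)
    (A : Euc n × Euc dd → Euc n →L[ℝ] Euc m) (dA : Euc n × Euc dd →L[ℝ] (Euc n →L[ℝ] Euc m))
    (hA1 : ContDiffAt ℝ 1 A pb) (hA : HasFDerivAt A dA pb)
    (Φ' : Euc n × Euc dd →L[ℝ] Euc m) (hΦ1 : ContDiffAt ℝ 1 Φ pb) (hΦ : HasFDerivAt Φ Φ' pb)
    (hΦA : ∀ h, Φ' (h, 0) = A pb h)
    (hs : Function.Surjective (S.orthogonalProjectionOnto.comp (A pb)))
    (hloc : ∀ᶠ z in 𝓝 (Φ pb), ∀ v, v ∈ subdiff θ z ↔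
      (v - vb ∈ S ∧ v ∈ subdiff θ (prS S (Φ pb) z)))
    (hpart : ∀ᶠ p in 𝓝 pb, ∀ q, q ∈ partialSubdiffX ψ p.1 p.2 ↔
      ∃ v ∈ subdiff θ (Φ p), adjL n m (A p) v = q)
    (hq : adjL n m (A pb) vb = qb) (u : Euc n) (P : Euc n × Euc dd) :
    P ∈ coderivPartialSubdiffX ψ pb.1 pb.2 qb u ↔
      ∃ g ∈ LN (Ωred θ (Φ pb) vb S) (0, 0),
        (∀ h : Euc n × Euc dd, ⟪P.1, h.1⟫ + ⟪P.2, h.2⟫ - ⟪u, adjL n m (dA h) vb⟫ =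
          g (S.orthogonalProjectionOnto (Φ' h), 0)) ∧
        ∀ c : S, -⟪u, adjL n m (A pb) c⟫ = g (0, c) := by
  set T := S.orthogonalProjectionOnto with hT
  let B0 : S →L[ℝ] Euc n := (adjL n m (A pb)).comp S.subtypeL
  let K : Submodule ℝ (Euc n) := (LinearMap.range B0.toLinearMap)ᗮ
  have hB0 : ∀ c : S, B0 c = adjL n m (A pb) c := fun c => rfl
  have hK : ∀ κ ∈ K, T (A pb κ) = 0 := by
    intro κ hκ
    rw [hT, Submodule.orthogonalProjectionOnto_eq_zero_iff, Submodule.mem_orthogonal]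
    intro c hc
    rw [← adjL_inner]
    exact (Submodule.mem_orthogonal _ _).1 hκ _ ⟨⟨c, hc⟩, rfl⟩
  -- the maps U p
  let U : Euc n × Euc dd → S →L[ℝ] S := fun p =>
    (T.comp (A pb)).comp ((adjL n m (A p)).comp S.subtypeL)
  have hUc : ContinuousAt U pb := by
    have h1 : ContinuousAt (fun p => adjL n m (A p)) pb :=
      (adjL n m).continuous.continuousAt.comp hA.continuousAt
    exact continuousAt_const.clm_comp (h1.clm_comp continuousAt_const)
  have hUi : Function.Injective (U pb) := by
    rw [injective_iff_map_eq_zero]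
    intro c hc
    apply adj_inj S (A pb) hs
    have : ⟪adjL n m (A pb) c, adjL n m (A pb) c⟫ = 0 := by
      rw [adjL_inner, inner_proj]
      have : S.orthogonalProjectionOnto (A pb (adjL n m (A pb) c)) = 0 := hc
      rw [this, inner_zero_right]
    exact inner_self_eq_zero.1 this
  have hUs : Function.Surjective (U pb) :=
    (LinearMap.injective_iff_surjective (f := (U pb).toLinearMap)).1 hUi
  obtain ⟨R, hR⟩ := exists_right_inv hUs
  have hUev : ∀ᶠ p in 𝓝 pb, Function.Injective (U p) := by
    filter_upwards [eventually_right_inv hUc hR] with p ⟨R', hR'⟩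
    exact (LinearMap.injective_iff_surjective (f := (U p).toLinearMap)).2 fun y => ⟨R' y, hR' y⟩
  let e := WithLp.prodContinuousLinearEquiv 2 ℝ (Euc n) (Euc dd)
  let es : (Euc n × Euc dd) →L[ℝ] WithLp 2 (Euc n × Euc dd) := e.symm
  let Γ : Set (WithLp 2 (Euc n × Euc dd) × Euc n) :=
    {q | q.2 ∈ partialSubdiffX ψ (e q.1).1 (e q.1).2}
  let Δ : Set (((Euc n × Euc dd) × S) × K) :=
    {t | vb + (t.1.2 : Euc m) ∈ subdiff θ (Φ t.1.1) ∧ t.2 = 0}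
  let t0 : ((Euc n × Euc dd) × S) × K := ((pb, 0), 0)
  let π1 : ((Euc n × Euc dd) × S) × K →L[ℝ] Euc n × Euc dd :=
    (ContinuousLinearMap.fst ℝ _ _).comp (ContinuousLinearMap.fst ℝ _ _)
  let π2 : ((Euc n × Euc dd) × S) × K →L[ℝ] S :=
    (ContinuousLinearMap.snd ℝ _ _).comp (ContinuousLinearMap.fst ℝ _ _)
  let π3 : ((Euc n × Euc dd) × S) × K →L[ℝ] K := ContinuousLinearMap.snd ℝ _ _
  have hπ : Tendsto π1 (𝓝 t0) (𝓝 pb) := π1.continuous.tendsto t0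
  let D : ((Euc n × Euc dd) × S) × K → WithLp 2 (Euc n × Euc dd) × Euc n := fun t =>
    (es (π1 t), adjL n m (A (π1 t)) (vb + S.subtypeL (π2 t)) + K.subtypeL (π3 t))
  let D' : ((Euc n × Euc dd) × S) × K →L[ℝ] WithLp 2 (Euc n × Euc dd) × Euc n :=
    (es.comp π1).prod
      (((adjL n m (A pb)).comp (S.subtypeL.comp π2) +
        (((adjL n m).comp (dA.comp π1)).flip vb)) + K.subtypeL.comp π3)
  have hD'ap : ∀ p c κ, D' ((p, c), κ) =
      (es p, adjL n m (A pb) c + adjL n m (dA p) vb + κ) := fun p c κ => rfl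
  have hD1 : ContDiffAt ℝ 1 D t0 := by
    have h1 : ContDiffAt ℝ 1 (fun t => adjL n m (A (π1 t))) t0 :=
      (adjL n m).contDiff.contDiffAt.comp t0
        (ContDiffAt.comp t0 (show ContDiffAt ℝ 1 A (π1 t0) from hA1) π1.contDiff.contDiffAt)
    have h2 : ContDiffAt ℝ 1 (fun t => vb + S.subtypeL (π2 t)) t0 :=
      contDiffAt_const.add (S.subtypeL.comp π2).contDiff.contDiffAt
    exact (es.comp π1).contDiff.contDiffAt.prodMk
      ((h1.clm_apply h2).add (K.subtypeL.comp π3).contDiff.contDiffAt)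
  have hD : HasFDerivAt D D' t0 := by
    have h1 : HasFDerivAt (fun t => adjL n m (A (π1 t))) ((adjL n m).comp (dA.comp π1)) t0 :=
      (adjL n m).hasFDerivAt.comp t0
        (HasFDerivAt.comp t0 (show HasFDerivAt A dA (π1 t0) from hA) π1.hasFDerivAt)
    have h2 : HasFDerivAt (fun t => vb + S.subtypeL (π2 t)) (S.subtypeL.comp π2) t0 :=
      (S.subtypeL.comp π2).hasFDerivAt.const_add vb
    have h3 := (es.comp π1).hasFDerivAt.prodMk
      ((h1.clm_apply h2).add ((K.subtypeL.comp π3).hasFDerivAt (x := t0)))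
    refine h3.congr_fderiv ?_
    apply ContinuousLinearMap.ext
    rintro ⟨⟨p, c⟩, κ⟩
    rw [hD'ap]
    simp [π1, π2, π3, t0]
  have hDs : Function.Surjective D' := by
    rintro ⟨y, q⟩
    let q' := q - adjL n m (dA (e y)) vb
    let R0 := LinearMap.range B0.toLinearMap
    have hd := R0.starProjection_add_starProjection_orthogonal q'
    obtain ⟨c, hc⟩ := R0.starProjection_apply_mem q'
    refine ⟨((e y, c), ⟨_, R0ᗮ.starProjection_apply_mem q'⟩), ?_⟩
    rw [hD'ap]
    refine Prod.ext (e.symm_apply_apply y) ?_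
    have hc' : adjL n m (A pb) c = R0.starProjection q' := hc
    show adjL n m (A pb) c + adjL n m (dA (e y)) vb + R0ᗮ.starProjection q' = q
    rw [hc', add_right_comm, hd]; simp [q']
  have hDΓ : ∀ᶠ t in 𝓝 t0, (t ∈ Δ ↔ D t ∈ Γ) := by
    filter_upwards [hπ.eventually hpart, hπ.eventually hUev,
      hπ.eventually (hΦ.continuousAt.eventually hloc)] with t h1 h2 h3
    show _ ↔ adjL n m (A (π1 t)) (vb + (t.1.2 : Euc m)) + (t.2 : Euc n) ∈
      partialSubdiffX ψ (π1 t).1 (π1 t).2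
    rw [h1]
    constructor
    · rintro ⟨h4, h5⟩
      exact ⟨_, h4, by rw [h5]; simp⟩
    · rintro ⟨v, hv, hvq⟩
      have hvS := ((h3 v).1 hv).1
      let s : S := ⟨v - vb, hvS⟩
      have e1 : adjL n m (A (π1 t)) ((s - t.1.2 : S) : Euc m) = t.2 := by
        have : ((s - t.1.2 : S) : Euc m) = v - (vb + (t.1.2 : Euc m)) := by
          simp only [s, Submodule.coe_sub]; abel
        rw [this, map_sub, hvq]; abel
      have e2 : U (π1 t) (s - t.1.2) = 0 := by
        show T (A pb (adjL n m (A (π1 t)) ((s - t.1.2 : S) : Euc m))) = 0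
        rw [e1]; exact hK _ t.2.2
      have e3 : s - t.1.2 = 0 := h2 (by rw [e2, map_zero])
      rw [e3] at e1
      refine ⟨?_, ?_⟩
      · rw [← sub_eq_zero.1 e3]
        show vb + (v - vb) ∈ subdiff θ (Φ (π1 t))
        rw [add_sub_cancel]; exact hv
      · apply Subtype.ext
        rw [← e1]; simp
  let Em : ((Euc n × Euc dd) × S) × K → (S × S) × K := fun t =>
    ((T (Φ (π1 t) - Φ pb), π2 t), π3 t)
  let E' : ((Euc n × Euc dd) × S) × K →L[ℝ] (S × S) × K :=
    ((T.comp (Φ'.comp π1)).prod π2).prod π3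
  have hE'ap : ∀ p c κ, E' ((p, c), κ) = ((T (Φ' p), c), κ) := fun p c κ => rfl
  have hE1 : ContDiffAt ℝ 1 Em t0 := by
    have h1 : ContDiffAt ℝ 1 (fun t => Φ (π1 t) - Φ pb) t0 :=
      (ContDiffAt.comp t0 (show ContDiffAt ℝ 1 Φ (π1 t0) from hΦ1)
        π1.contDiff.contDiffAt).sub contDiffAt_const
    exact ((T.contDiff.contDiffAt.comp t0 h1).prodMk π2.contDiff.contDiffAt).prodMk
      π3.contDiff.contDiffAt
  have hE : HasFDerivAt Em E' t0 := by
    have h1 : HasFDerivAt (fun t => Φ (π1 t) - Φ pb) (Φ'.comp π1) t0 :=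
      (HasFDerivAt.comp t0 (show HasFDerivAt Φ Φ' (π1 t0) from hΦ)
        π1.hasFDerivAt).sub_const _
    exact ((T.hasFDerivAt.comp t0 h1).prodMk π2.hasFDerivAt).prodMk π3.hasFDerivAt
  have hEs : Function.Surjective E' := by
    rintro ⟨⟨s, c⟩, κ⟩
    obtain ⟨h, hh⟩ := hs s
    refine ⟨(((h, 0), c), κ), ?_⟩
    rw [hE'ap, hΦA]
    rw [← hh]; rfl
  have hE0 : Em t0 = ((0, 0), 0) := by
    show ((T (Φ pb - Φ pb), (0 : S)), (0 : K)) = _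
    rw [sub_self, map_zero]
  have hEΓ : ∀ᶠ t in 𝓝 t0, (t ∈ Δ ↔
      Em t ∈ {r : (S × S) × K | r.1 ∈ Ωred θ (Φ pb) vb S ∧ r.2 = 0}) := by
    filter_upwards [hπ.eventually (hΦ.continuousAt.eventually hloc)] with t h3
    show vb + (t.1.2 : Euc m) ∈ subdiff θ (Φ (π1 t)) ∧ t.2 = 0 ↔
      vb + (t.1.2 : Euc m) ∈ subdiff θ (Φ pb + ((T (Φ (π1 t) - Φ pb) : S) : Euc m)) ∧ t.2 = 0
    rw [h3, prS_eq]
    simp [hT]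
  have hD0 : D t0 = (pl2 pb.1 pb.2, qb) := by
    refine Prod.ext rfl ?_
    show adjL n m (A pb) (vb + ((0 : S) : Euc m)) + ((0 : K) : Euc n) = qb
    rw [Submodule.coe_zero, Submodule.coe_zero, add_zero, add_zero, hq]
  let f : WithLp 2 (Euc n × Euc dd) × Euc n →L[ℝ] ℝ :=
    (innerSL ℝ (pl2 P.1 P.2)).comp (ContinuousLinearMap.fst ℝ _ _) +
      (innerSL ℝ (-u)).comp (ContinuousLinearMap.snd ℝ _ _)
  have hstep1 : P ∈ coderivPartialSubdiffX ψ pb.1 pb.2 qb u ↔ f ∈ LN Γ (pl2 pb.1 pb.2, qb) :=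
    limitingNormal_pl2 _ _ _ _
  have hstep2 : f ∈ LN Γ (pl2 pb.1 pb.2, qb) ↔ f.comp D' ∈ LN Δ t0 := by
    rw [LN_preimage hD1 hD hDs hDΓ, hD0]
    constructor
    · intro h; exact ⟨f, h, rfl⟩
    · rintro ⟨g, hg, hgf⟩
      have : f = g := by
        apply ContinuousLinearMap.ext
        intro y
        obtain ⟨t, rfl⟩ := hDs y
        exact congrArg (fun k : _ →L[ℝ] ℝ => k t) hgf
      rwa [this]
  have hfD : ∀ p c κ, f.comp D' ((p, c), κ) = ⟪P.1, p.1⟫ + ⟪P.2, p.2⟫ -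
      ⟪u, adjL n m (A pb) c⟫ - ⟪u, adjL n m (dA p) vb⟫ - ⟪u, (κ : Euc n)⟫ := by
    intro p c κ
    rw [ContinuousLinearMap.comp_apply, hD'ap]
    show ⟪pl2 P.1 P.2, es p⟫ + ⟪-u, adjL n m (A pb) c + adjL n m (dA p) vb + κ⟫ = _
    have : ⟪pl2 P.1 P.2, es p⟫ = ⟪P.1, p.1⟫ + ⟪P.2, p.2⟫ := rfl
    rw [this, inner_neg_left, inner_add_right, inner_add_right]
    ring
  rw [hstep1, hstep2, LN_preimage hE1 hE hEs hEΓ, hE0]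
  constructor
  · rintro ⟨g, hg, heq⟩
    rw [LN_prod_zero] at hg
    have hev : ∀ p c κ, f.comp D' ((p, c), κ) = g ((T (Φ' p), c), κ) := by
      intro p c κ
      rw [heq]; rfl
    refine ⟨_, hg, fun h => ?_, fun c => ?_⟩
    · have := hev h 0 0
      rw [hfD] at this
      simpa using this
    · have := hev 0 c 0
      rw [hfD] at this
      simpa using this
  · rintro ⟨g, hg, h1, h2⟩
    refine ⟨g.comp (ContinuousLinearMap.fst ℝ _ _) -
      ((innerSL ℝ u).comp K.subtypeL).comp (ContinuousLinearMap.snd ℝ _ _), ?_, ?_⟩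
    · rw [LN_prod_zero]
      convert hg using 1
      apply ContinuousLinearMap.ext
      intro t; simp
    · apply ContinuousLinearMap.ext
      rintro ⟨⟨p, c⟩, κ⟩
      have e : g (T (Φ' p), c) = g (T (Φ' p), 0) + g (0, c) := by rw [← map_add]; simp
      rw [hfD]
      show _ = g (T (Φ' p), c) - ⟪u, (κ : Euc n)⟫
      rw [e, ← h1, ← h2]; ring

end

set_option maxHeartbeats 2000000

/-- Exact second-order chain rule for fully amenable compositions
`ψ = θ ∘ Φ` with CPWL outer function under the second-order qualification condition:
`(D*∂ₓψ)(xb,wb,qb)(u) = (∇²ₓₓ⟨vb,Φ⟩u, ∇²ₓ_w⟨vb,Φ⟩u) + (∇ₓΦ*, ∇_wΦ*) ∂²θ(zb,vb)(∇ₓΦ u)`. -/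
theorem second_order_chain_rule_cpwl {n dd m l p : ℕ} (hl : 0 < l)
    (a : Fin l → Euc m) (α : Fin l → ℝ) (d : Fin p → Euc m) (β : Fin p → ℝ)
    (hdom : (cpwlDom d β).Nonempty)
    (Φ : Euc n × Euc dd → Euc m) (xb : Euc n) (wb : Euc dd)
    (hΦ : ContDiffAt ℝ 2 Φ (xb, wb)) (hzb : Φ (xb, wb) ∈ cpwlDom d β)
    (hsoqc : (Spar (cpwlFun a α d β) (Φ (xb, wb)) : Set (Euc m)) ∩
        {y | ContinuousLinearMap.adjoint (fderiv ℝ (fun x => Φ (x, wb)) xb) y = 0} = {0})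
    (qb : Euc n)
    (hqb : qb ∈ partialSubdiffX (fun x w => cpwlFun a α d β (Φ (x, w))) xb wb)
    (vb : Euc m)
    (hvb : {v ∈ subdiff (cpwlFun a α d β) (Φ (xb, wb)) |
        ContinuousLinearMap.adjoint (fderiv ℝ (fun x => Φ (x, wb)) xb) v = qb} = {vb}) :
    ∀ u : Euc n,
      coderivPartialSubdiffX (fun x w => cpwlFun a α d β (Φ (x, w))) xb wb qb u =
        {P : Euc n × Euc dd |
          ∃ y ∈ sosd (cpwlFun a α d β) (Φ (xb, wb)) vb
              ((fderiv ℝ (fun x => Φ (x, wb)) xb) u),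
            P = (hessXX (fun x w => ⟪vb, Φ (x, w)⟫) xb wb u +
                   ContinuousLinearMap.adjoint (fderiv ℝ (fun x => Φ (x, wb)) xb) y,
                 ContinuousLinearMap.adjoint (hessWX (fun x w => ⟪vb, Φ (x, w)⟫) xb wb) u +
                   ContinuousLinearMap.adjoint (fderiv ℝ (fun w => Φ (xb, w)) wb) y)} := by
  intro u
  have hvbm : vb ∈ {v ∈ subdiff (cpwlFun a α d β) (Φ (xb, wb)) |
      ContinuousLinearMap.adjoint (fderiv ℝ (fun x => Φ (x, wb)) xb) v = qb} := by
    rw [hvb]; rfl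
  obtain ⟨hv1, hv2⟩ := hvbm
  let S : Submodule ℝ (Euc m) := Spar (cpwlFun a α d β) (Φ (xb, wb))
  let T := S.orthogonalProjectionOnto
  let inlL := ContinuousLinearMap.inl ℝ (Euc n) (Euc dd)
  let A : Euc n × Euc dd → Euc n →L[ℝ] Euc m := fun p => (fderiv ℝ Φ p).comp inlL
  let cR : ((Euc n × Euc dd) →L[ℝ] Euc m) →L[ℝ] (Euc n →L[ℝ] Euc m) :=
    (ContinuousLinearMap.compL ℝ (Euc n) (Euc n × Euc dd) (Euc m)).flip inlL
  let D2 := fderiv ℝ (fderiv ℝ Φ) (xb, wb)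
  let dA : (Euc n × Euc dd) →L[ℝ] (Euc n →L[ℝ] Euc m) := cR.comp D2
  have hdA : ∀ p h, dA p h = D2 p (h, 0) := fun p h => rfl
  have hf1 : ContDiffAt ℝ 1 (fderiv ℝ Φ) (xb, wb) := hΦ.fderiv_right (by norm_num)
  have hA1 : ContDiffAt ℝ 1 A (xb, wb) := cR.contDiff.contDiffAt.comp _ hf1
  have hA : HasFDerivAt A dA (xb, wb) :=
    cR.hasFDerivAt.comp _ (hf1.differentiableAt (by norm_num)).hasFDerivAt
  have hΦ1 : ContDiffAt ℝ 1 Φ (xb, wb) := hΦ.of_le (by norm_num)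
  have hΦd : HasFDerivAt Φ (fderiv ℝ Φ (xb, wb)) (xb, wb) :=
    (hΦ1.differentiableAt (by norm_num)).hasFDerivAt
  have hevC : ∀ᶠ p in 𝓝 (xb, wb), ContDiffAt ℝ 1 Φ p := hΦ1.eventually (by norm_num)
  have hpd : ∀ p : Euc n × Euc dd, ContDiffAt ℝ 1 Φ p →
      HasFDerivAt (fun x => Φ (x, p.2)) (A p) p.1 := by
    intro p hp
    exact HasFDerivAt.comp p.1 (show HasFDerivAt Φ (fderiv ℝ Φ p) (p.1, p.2) from
      (hp.differentiableAt (by norm_num)).hasFDerivAt) (hasFDerivAt_prodMk_left p.1 p.2)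
  have hAb : fderiv ℝ (fun x => Φ (x, wb)) xb = A (xb, wb) := (hpd _ hΦ1).fderiv
  have hwd : HasFDerivAt (fun w => Φ (xb, w))
      ((fderiv ℝ Φ (xb, wb)).comp (ContinuousLinearMap.inr ℝ (Euc n) (Euc dd))) wb :=
    HasFDerivAt.comp wb (show HasFDerivAt Φ (fderiv ℝ Φ (xb, wb)) (xb, wb) from hΦd)
      (hasFDerivAt_prodMk_right xb wb)
  have hs : Function.Surjective (T.comp (A (xb, wb))) := by
    have : LinearMap.range (T.comp (A (xb, wb))).toLinearMap = ⊤ := by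
      rw [← Submodule.orthogonal_eq_bot_iff, Submodule.eq_bot_iff]
      intro c hc
      have h0 : ContinuousLinearMap.adjoint (A (xb, wb)) (c : Euc m) = 0 := by
        apply ext_inner_right ℝ
        intro h
        rw [ContinuousLinearMap.adjoint_inner_left, inner_proj, inner_zero_left,
          real_inner_comm]
        exact (Submodule.mem_orthogonal _ _).1 hc _ ⟨h, rfl⟩
      have h1 : (c : Euc m) ∈ (Spar (cpwlFun a α d β) (Φ (xb, wb)) : Set (Euc m)) ∩
          {y | ContinuousLinearMap.adjoint (fderiv ℝ (fun x => Φ (x, wb)) xb) y = 0} :=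
        ⟨c.2, by rw [hAb]; exact h0⟩
      rw [hsoqc] at h1
      exact Subtype.ext h1
    exact LinearMap.range_eq_top.1 this
  have hsev : ∀ᶠ p in 𝓝 (xb, wb), Function.Surjective (T.comp (A p)) := by
    obtain ⟨R, hR⟩ := exists_right_inv hs
    have hc : ContinuousAt (fun p => T.comp (A p)) (xb, wb) :=
      continuousAt_const.clm_comp hA.continuousAt
    filter_upwards [eventually_right_inv hc hR] with p ⟨R', hR'⟩
    exact fun y => ⟨R' y, hR' y⟩
  have hpart : ∀ᶠ p in 𝓝 (xb, wb), ∀ q,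
      q ∈ partialSubdiffX (fun x w => cpwlFun a α d β (Φ (x, w))) p.1 p.2 ↔
      ∃ v ∈ subdiff (cpwlFun a α d β) (Φ p), adjL n m (A p) v = q := by
    have h1 := hΦd.continuousAt.eventually (local_structure hl hdom hv1).eventually_nhds
    filter_upwards [hevC, hsev, h1] with p h2 h3 h4 q
    have h5 : fderiv ℝ (fun x => Φ (x, p.2)) p.1 = A p := (hpd p h2).fderiv
    have := partial_iff hl hdom S (fun x w => cpwlFun a α d β (Φ (x, w)))
      (fun x => Φ (x, p.2)) p.1 p.2 (fun _ => rfl)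
      (ContDiffAt.comp p.1 (show ContDiffAt ℝ 1 Φ (p.1, p.2) from h2)
        (contDiffAt_id.prodMk contDiffAt_const)) (by rw [h5]; exact h3) h4 q
    rw [this, h5]; rfl
  have hloc := local_subdiff hl hdom hv1
  have hcore := coderiv_core S (cpwlFun a α d β) (fun x w => cpwlFun a α d β (Φ (x, w))) Φ
    (xb, wb) vb qb A dA hA1 hA (fderiv ℝ Φ (xb, wb)) hΦ1 hΦd (fun _ => rfl) hs hloc hpart
    (by rw [adjL_apply, ← hAb]; exact hv2) u
  have hsos := sosd_iff S hloc ((fderiv ℝ (fun x => Φ (x, wb)) xb) u)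
  -- Hessians
  have hgrad : ∀ᶠ p in 𝓝 (xb, wb),
      gradient (fun x' => ⟪vb, Φ (x', p.2)⟫) p.1 = adjL n m (A p) vb := by
    filter_upwards [hevC] with p h2
    apply HasGradientAt.gradient
    rw [hasGradientAt_iff_hasFDerivAt]
    have := (innerSL ℝ vb).hasFDerivAt.comp p.1 (hpd p h2)
    refine this.congr_fderiv ?_
    apply ContinuousLinearMap.ext
    intro h
    rw [InnerProductSpace.toDual_apply_apply, adjL_inner]; rfl
  have hG : HasFDerivAt (fun p => adjL n m (A p) vb) (((adjL n m).comp dA).flip vb)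
      (xb, wb) := by
    have h1 : HasFDerivAt (fun p => adjL n m (A p)) ((adjL n m).comp dA) (xb, wb) :=
      (adjL n m).hasFDerivAt.comp _ hA
    have := h1.clm_apply (hasFDerivAt_const vb (xb, wb))
    refine this.congr_fderiv ?_
    apply ContinuousLinearMap.ext
    intro h
    simp
  have hXX : ∀ h, hessXX (fun x w => ⟪vb, Φ (x, w)⟫) xb wb h = adjL n m (dA (h, 0)) vb := by
    intro h
    have ht : Tendsto (fun x => (x, wb)) (𝓝 xb) (𝓝 (xb, wb)) :=
      (Continuous.prodMk continuous_id continuous_const).tendsto xb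
    have e1 : (fun x => gradient (fun x' => ⟪vb, Φ (x', wb)⟫) x) =ᶠ[𝓝 xb]
        fun x => adjL n m (A (x, wb)) vb := ht.eventually hgrad
    have e2 : HasFDerivAt (fun x => adjL n m (A (x, wb)) vb) _ xb :=
      HasFDerivAt.comp (f := fun x : Euc n => (x, wb)) (g := fun p => adjL n m (A p) vb) xb hG
      (hasFDerivAt_prodMk_left xb wb)
    have e3 := (e2.congr_of_eventuallyEq e1).fderiv
    show fderiv ℝ (fun x => gradient (fun x' => ⟪vb, Φ (x', wb)⟫) x) xb h = _
    rw [e3]; rfl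
  have hWX : ∀ k, hessWX (fun x w => ⟪vb, Φ (x, w)⟫) xb wb k = adjL n m (dA (0, k)) vb := by
    intro k
    have ht : Tendsto (fun w => (xb, w)) (𝓝 wb) (𝓝 (xb, wb)) :=
      (Continuous.prodMk continuous_const continuous_id).tendsto wb
    have e1 : (fun w => gradient (fun x' => ⟪vb, Φ (x', w)⟫) xb) =ᶠ[𝓝 wb]
        fun w => adjL n m (A (xb, w)) vb := ht.eventually hgrad
    have e2 : HasFDerivAt (fun w => adjL n m (A (xb, w)) vb) _ wb :=
      HasFDerivAt.comp (f := fun w : Euc dd => (xb, w)) (g := fun p => adjL n m (A p) vb) wb hG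
      (hasFDerivAt_prodMk_right xb wb)
    have e3 := (e2.congr_of_eventuallyEq e1).fderiv
    show fderiv ℝ (fun w => gradient (fun x' => ⟪vb, Φ (x', w)⟫) xb) wb k = _
    rw [e3]; rfl
  have hsymm : IsSymmSndFDerivAt ℝ Φ (xb, wb) :=
    hΦ.isSymmSndFDerivAt (by rw [minSmoothness_of_isRCLikeNormedField])
  have hHess : ∀ h : Euc n × Euc dd, ⟪u, adjL n m (dA h) vb⟫ =
      ⟪hessXX (fun x w => ⟪vb, Φ (x, w)⟫) xb wb u, h.1⟫ +
      ⟪ContinuousLinearMap.adjoint (hessWX (fun x w => ⟪vb, Φ (x, w)⟫) xb wb) u, h.2⟫ := by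
    rintro ⟨h, k⟩
    have e0 : ((h, k) : Euc n × Euc dd) = (h, 0) + (0, k) := by simp
    have e1 : D2 (h, 0) (u, 0) = D2 (u, 0) (h, 0) := hsymm (h, 0) (u, 0)
    rw [ContinuousLinearMap.adjoint_inner_left, hXX, hWX]
    have e2 : adjL n m (dA (h, k)) vb = adjL n m (dA (h, 0)) vb + adjL n m (dA (0, k)) vb := by
      rw [e0, map_add, map_add]; rfl
    rw [e2, inner_add_right]
    congr 1
    rw [inner_adjL, adjL_inner, hdA, hdA, e1, real_inner_comm]
  have hsplit : ∀ h : Euc n × Euc dd, fderiv ℝ Φ (xb, wb) h =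
      fderiv ℝ (fun x => Φ (x, wb)) xb h.1 + fderiv ℝ (fun w => Φ (xb, w)) wb h.2 := by
    rintro ⟨h, k⟩
    have e0 : ((h, k) : Euc n × Euc dd) = (h, 0) + (0, k) := by simp
    rw [hAb, hwd.fderiv, e0, map_add]; simp [A, inlL]
  have hc2 : ∀ c : S, ⟪fderiv ℝ (fun x => Φ (x, wb)) xb u, (c : Euc m)⟫ =
      ⟪u, adjL n m (A (xb, wb)) c⟫ := by
    intro c; rw [inner_adjL, hAb]
  ext P
  refine (hcore P).trans ?_
  constructor
  · rintro ⟨g, hg, h1, h2⟩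
    let y : S := (InnerProductSpace.toDual ℝ S).symm (g.comp (ContinuousLinearMap.inl ℝ S S))
    have hy : ∀ ζ, ⟪(y : Euc m), ζ⟫ = g (S.orthogonalProjectionOnto ζ, 0) := by
      intro ζ
      rw [inner_proj]
      simp only [y, InnerProductSpace.toDual_symm_apply]; rfl
    refine ⟨y, (hsos y).2 ⟨g, hg, hy, fun c => by rw [hc2, h2]⟩, ?_⟩
    refine Prod.ext ?_ ?_
    · apply ext_inner_right ℝ
      intro h
      have := h1 (h, 0)
      rw [← hy, hHess, hsplit] at this
      simp only [inner_zero_right, add_zero, map_zero] at this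
      rw [inner_add_left, ContinuousLinearMap.adjoint_inner_left]
      linarith
    · apply ext_inner_right ℝ
      intro k
      have := h1 (0, k)
      rw [← hy, hHess, hsplit] at this
      simp only [inner_zero_right, zero_add, map_zero] at this
      rw [inner_add_left, ContinuousLinearMap.adjoint_inner_left (fderiv ℝ _ _)]
      linarith
  · rintro ⟨y, hy, rfl⟩
    obtain ⟨g, hg, h1, h2⟩ := (hsos y).1 hy
    refine ⟨g, hg, fun h => ?_, fun c => by rw [← hc2, h2]⟩
    rw [← h1, hHess, hsplit, inner_add_right, inner_add_left, inner_add_left,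
      ContinuousLinearMap.adjoint_inner_left (fderiv ℝ (fun x => Φ (x, wb)) xb),
      ContinuousLinearMap.adjoint_inner_left (fderiv ℝ (fun w => Φ (xb, w)) wb)]
    ring
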